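/- Fix a sign ε ∈ {+1, −1}. Suppose a sequence of integers {y_n} satisfies y_n = ε n|a| + d_n with d_n = O(n^{1/3}). Then p_n(φ; y_n) = (1 + (−1)^{n+y_n}) α₀² n^{−2/3} |Ai(ε α₀ n^{−1/3} d_n)|² (1 + ε|a| λ_A(φ)) + O(1/n) as n → ∞, where α₀ = (2/(|a||b|²))^{1/3}. -/

import Mathlib

/-!
Airy asymptotics of a one-dimensional quantum walk at its walls `y ≈ ± n |a|`.

Write `A = |a|`. By Fourier inversion, in the variable `s` with `e^{ik} = ζ e^{is}`, `ζ = i ā / |a|`,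
the amplitude is `ζ^x (2π)⁻¹ ∫ e^{ixs} M(s)ⁿ φ ds` over one period (`qw_fourier`). The `2 × 2` symbol
`M(s)` has the eigenvalues `-i e^{-iν(s)}` and `i e^{iν(s)}`, where `sin ν = A sin s`; the shift
`s ↦ s + π` exchanges the two spectral branches (`symQ_iter`), so both give the same integral up to
the sign `(-1)^{n+x}`. This produces the factor `1 + (-1)^{n+x}` and leaves the single oscillatory
integral `∫ e^{ixs} e^{-inν(s)} p(s) ds`, with `p` the spectral projection of `φ` (`qwP_eq`).

At the right wall `x = n A + d` its phase is `n (A s - ν(s)) + d s`, and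
`A s - ν(s) = A (1 - A²) s³ / 6 + O(s⁴)`. With `n κ³ = 2 / (A (1 - A²))`, that is
`κ = α₀ n^{-1/3}`, the contour is moved to `Im s = κ`, the sides of the rectangle cancelling by
periodicity (`contour_shift`). On that line the integrand has Gaussian decay in `Re s / κ`
(`norm_gF_le`) and differs from `p(0)` times the Airy integrand on `Im z = 1` by a relative error
`O(κ)` times a polynomial (`gF_sub_cubic`, `pointwise_inside`). The Airy integral may itself be moved
to that line (`Ai_eq`), so the oscillatory integral is `2π κ p(0) Ai(κ d) + O(κ²)` (`airy_core`).
Squaring gives an error `O(κ³) = O(1/n)`, and `‖p(0)‖² = (1 + A λ_A(φ)) / 2` (`nsq_projQ_zero`).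

The left wall follows by the reflection `x ↦ -x`, which maps the walk of `(a, b)` to that of
`(ā, -b̄)` and changes the sign of `λ_A` (`qwP_reflect`, `lamA_reflect`).
-/


open Filter Topology Asymptotics MeasureTheory

noncomputable section

/-- One step of the (column-decomposition) quantum walk `U` on functions `ℤ → ℂ²`:
`(Uf)(x) = P f(x+1) + Q f(x-1)` with `P = [[a,0],[-conj b,0]]`, `Q = [[0,b],[0,conj a]]`. -/
def qwStep (a b : ℂ) (f : ℤ → ℂ × ℂ) : ℤ → ℂ × ℂ := fun x =>
  (a * (f (x + 1)).1 + b * (f (x - 1)).2,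
   -(starRingEnd ℂ) b * (f (x + 1)).1 + (starRingEnd ℂ) a * (f (x - 1)).2)

/-- `δ₀ ⊗ φ : ℤ → ℂ²`. -/
def qwDelta (φ : ℂ × ℂ) : ℤ → ℂ × ℂ := fun x => if x = 0 then φ else 0

/-- Squared norm of a vector in `ℂ²`. -/
def nsq (u : ℂ × ℂ) : ℝ := ‖u.1‖ ^ 2 + ‖u.2‖ ^ 2

/-- Transition probability `p_n(φ; y) = ‖(Uⁿ(δ₀ ⊗ φ))(y)‖²`. -/
def qwP (a b : ℂ) (φ : ℂ × ℂ) (n : ℕ) (y : ℤ) : ℝ :=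
  nsq (((qwStep a b)^[n] (qwDelta φ)) y)

/-- `λ_A(φ) = |φ₂|² − |φ₁|² + (1/|a|²)(ab conj(φ₁)φ₂ + conj(ab) φ₁ conj(φ₂))` (a real number). -/
def lamA (a b : ℂ) (φ : ℂ × ℂ) : ℝ :=
  ‖φ.2‖ ^ 2 - ‖φ.1‖ ^ 2 +
    (a * b * (starRingEnd ℂ) φ.1 * φ.2 +
      (starRingEnd ℂ) a * (starRingEnd ℂ) b * φ.1 * (starRingEnd ℂ) φ.2).re / ‖a‖ ^ 2

/-- `μ(t) = arccos(|a| cos t)`. -/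
def muF (a : ℂ) (t : ℝ) : ℝ := Real.arccos (‖a‖ * Real.cos t)

/-- `t(η) = arcsin(|b|η/(|a|√(1 − η²)))`. -/
def tF (a b : ℂ) (η : ℝ) : ℝ := Real.arcsin (‖b‖ * η / (‖a‖ * Real.sqrt (1 - η ^ 2)))

/-- `θ(η) = 2μ(t(η)) − 2η t(η)`. -/
def thetaF (a b : ℂ) (η : ℝ) : ℝ := 2 * muF a (tF a b η) - 2 * η * tF a b η

/-- The Airy function `Ai(x) = (1/2π)∫_{−∞}^{∞} e^{i(ξ³/3 + ξx)} dξ`, as an improper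
(oscillatory) integral, i.e. the limit of `∫_{−R}^{R}` as `R → ∞`. -/
def Ai (x : ℝ) : ℂ :=
  ((1 / (2 * Real.pi) : ℝ) : ℂ) *
    limUnder Filter.atTop
      (fun R : ℝ => ∫ t in (-R)..R, Complex.exp (Complex.I * ((t : ℂ) ^ 3 / 3 + (t : ℂ) * (x : ℂ))))

/-! ### The eigenvalue branch and its phase -/

/-- The branch of `√(1 - A² sin² s)` that equals `1` at `s = 0`, holomorphic near the real axis
when `0 ≤ A < 1`. -/
def uF (A : ℝ) (s : ℂ) : ℂ := Complex.exp (Complex.log (1 - (A : ℂ) ^ 2 * Complex.sin s ^ 2) / 2)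

/-- The domain on which `uF` is known to be holomorphic. -/
def uDom (A : ℝ) : Set ℂ := {s | 0 < (1 - (A : ℂ) ^ 2 * Complex.sin s ^ 2).re}

/-- `e^{-iν(s)}` with `sin ν(s) = A sin s`. -/
def fF (A : ℝ) (s : ℂ) : ℂ := uF A s - Complex.I * A * Complex.sin s

/-- `e^{i h(s)}` with `h(s) = A s - ν(s)`, `sin ν(s) = A sin s`. -/
def gF (A : ℝ) (s : ℂ) : ℂ := Complex.exp (Complex.I * A * s) * fF A s

/-- The derivative of the phase `h(s) = A s - ν(s)`. -/
def hF (A : ℝ) (s : ℂ) : ℂ := A * (1 - Complex.cos s / uF A s)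

/-- On `|Im s| ≤ δ` one has `Re (sin² s) ≤ cosh² δ`, so a thin strip lies in the domain as `A < 1`. -/
lemma exists_strip {A : ℝ} (h0 : 0 < A) (h1 : A < 1) :
    ∃ δ > 0, ∀ s : ℂ, |s.im| ≤ δ → s ∈ uDom A := by
  have hc : Tendsto (fun τ : ℝ => A ^ 2 * Real.cosh τ ^ 2) (𝓝 0) (𝓝 (A ^ 2 * Real.cosh 0 ^ 2)) :=
    Continuous.tendsto (by fun_prop) 0
  have h2 : A ^ 2 * Real.cosh 0 ^ 2 < 1 := by
    simp only [Real.cosh_zero]; nlinarith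
  obtain ⟨δ, hδ, hb⟩ := Metric.eventually_nhds_iff.1 (hc.eventually (gt_mem_nhds h2))
  refine ⟨δ / 2, by positivity, fun s hs => ?_⟩
  have h3 : A ^ 2 * Real.cosh s.im ^ 2 < 1 := hb (by
    rw [Real.dist_eq, sub_zero]; linarith)
  have h4 : Complex.sin s = ⟨Real.sin s.re * Real.cosh s.im, Real.cos s.re * Real.sinh s.im⟩ := by
    rw [Complex.sin_eq]
    apply Complex.ext <;>
    simp [← Complex.ofReal_sin, ← Complex.ofReal_cosh, ← Complex.ofReal_cos, ← Complex.ofReal_sinh]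
  simp only [uDom, Set.mem_ofPred_eq, h4]
  have : (1 - (A : ℂ) ^ 2 * (⟨Real.sin s.re * Real.cosh s.im, Real.cos s.re * Real.sinh s.im⟩ : ℂ) ^ 2).re
      = 1 - A ^ 2 * ((Real.sin s.re * Real.cosh s.im) ^ 2 - (Real.cos s.re * Real.sinh s.im) ^ 2) := by
    simp [pow_two]
  rw [this]
  have h5 := Real.sin_sq_le_one s.re
  have h6 : (Real.sin s.re * Real.cosh s.im) ^ 2 ≤ Real.cosh s.im ^ 2 := by
    rw [mul_pow]; nlinarith [sq_nonneg (Real.cosh s.im)]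
  nlinarith [sq_nonneg (Real.cos s.re * Real.sinh s.im), sq_nonneg A, mul_nonneg (sq_nonneg A) (sq_nonneg (Real.cos s.re * Real.sinh s.im)), mul_le_mul_of_nonneg_left h6 (sq_nonneg A)]

lemma isOpen_uDom (A : ℝ) : IsOpen (uDom A) :=
  isOpen_lt continuous_const (by fun_prop)

lemma uF_ne (A : ℝ) (s : ℂ) : uF A s ≠ 0 := Complex.exp_ne_zero _

lemma uF_sq {A : ℝ} {s : ℂ} (hs : s ∈ uDom A) :
    uF A s ^ 2 = 1 - (A : ℂ) ^ 2 * Complex.sin s ^ 2 := by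
  have : 1 - (A : ℂ) ^ 2 * Complex.sin s ^ 2 ≠ 0 := by
    intro h; rw [uDom, Set.mem_ofPred_eq, h] at hs; simp at hs
  rw [uF, ← Complex.exp_nat_mul]
  push_cast
  rw [mul_div_cancel₀ _ (by norm_num), Complex.exp_log this]

lemma uF_hasDerivAt {A : ℝ} {s : ℂ} (hs : s ∈ uDom A) :
    HasDerivAt (uF A) (-(A : ℂ) ^ 2 * Complex.sin s * Complex.cos s / uF A s) s := by
  have hm : 1 - (A : ℂ) ^ 2 * Complex.sin s ^ 2 ∈ Complex.slitPlane := Or.inl hs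
  have h1 : HasDerivAt (fun s : ℂ => 1 - (A : ℂ) ^ 2 * Complex.sin s ^ 2)
      (-(A : ℂ) ^ 2 * (2 * Complex.sin s * Complex.cos s)) s := by
    have := (((Complex.hasDerivAt_sin s).pow 2).const_mul ((A : ℂ) ^ 2)).const_sub 1
    refine this.congr_deriv ?_
    push_cast; ring
  have h2 := ((h1.clog hm).div_const 2).cexp
  refine h2.congr_deriv ?_
  have h3 : (1 - (A : ℂ) ^ 2 * Complex.sin s ^ 2) = uF A s ^ 2 := (uF_sq hs).symm
  have h4 := uF_ne A s
  change uF A s * _ = _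
  rw [h3]
  field_simp

lemma uF_zero (A : ℝ) : uF A 0 = 1 := by simp [uF]

lemma uF_add_pi (A : ℝ) (s : ℂ) : uF A (s + Real.pi) = uF A s := by
  simp [uF, Complex.sin_add_pi]

lemma uF_ofReal {A : ℝ} {x : ℝ} (hs : (x : ℂ) ∈ uDom A) :
    uF A x = (Real.sqrt (1 - A ^ 2 * Real.sin x ^ 2) : ℝ) := by
  have h1 : (1 - (A : ℂ) ^ 2 * Complex.sin x ^ 2) = ((1 - A ^ 2 * Real.sin x ^ 2 : ℝ) : ℂ) := by
    push_cast; rfl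
  have h2 : 0 < 1 - A ^ 2 * Real.sin x ^ 2 := by
    have := hs
    rw [uDom, Set.mem_ofPred_eq, h1, Complex.ofReal_re] at this
    exact this
  rw [uF, h1, ← Complex.ofReal_log h2.le]
  rw [Real.sqrt_eq_rpow, Real.rpow_def_of_pos h2]
  push_cast
  congr 1
  ring

/-- The logarithmic derivative of `gF` is `i hF`; this replaces any use of `ν` itself. -/
lemma gF_hasDerivAt {A : ℝ} {s : ℂ} (hs : s ∈ uDom A) :
    HasDerivAt (gF A) (Complex.I * hF A s * gF A s) s := by
  have h1 : HasDerivAt (fun s : ℂ => Complex.exp (Complex.I * A * s))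
      (Complex.exp (Complex.I * A * s) * (Complex.I * A)) s := by
    have := ((hasDerivAt_id s).const_mul (Complex.I * (A : ℂ))).cexp
    simpa using this
  have h2 : HasDerivAt (fF A) (-(A : ℂ) ^ 2 * Complex.sin s * Complex.cos s / uF A s
      - Complex.I * A * Complex.cos s) s :=
    (uF_hasDerivAt hs).sub ((Complex.hasDerivAt_sin s).const_mul _)
  refine (h1.mul h2).congr_deriv ?_
  have h4 := uF_ne A s
  simp only [hF, gF, fF]
  field_simp
  linear_combination (-(Complex.sin s * A ^ 2 * Complex.cos s)) * Complex.I_sq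

lemma hF_differentiableOn (A : ℝ) : DifferentiableOn ℂ (hF A) (uDom A) := fun s hs =>
  (((Complex.hasDerivAt_cos s).div (uF_hasDerivAt hs) (uF_ne A s)).const_sub 1
    |>.const_mul (A : ℂ)).differentiableAt.differentiableWithinAt

lemma gF_zero (A : ℝ) : gF A 0 = 1 := by simp [gF, fF, uF_zero]

/-! ### Cubic expansion of the phase -/

/-- The rectangle `|Re s| ≤ π`, `|Im s| ≤ δ`. -/
def kRect (δ : ℝ) : Set ℂ := Set.Icc (-Real.pi) Real.pi ×ℂ Set.Icc (-δ) δ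

lemma kRect_compact (δ : ℝ) : IsCompact (kRect δ) := isCompact_Icc.reProdIm isCompact_Icc

lemma mem_kRect {δ : ℝ} {s : ℂ} : s ∈ kRect δ ↔ |s.re| ≤ Real.pi ∧ |s.im| ≤ δ := by
  simp [kRect, Complex.mem_reProdIm, abs_le]

lemma kRect_smul {δ : ℝ} {s : ℂ} (hs : s ∈ kRect δ) {t : ℝ} (h0 : 0 ≤ t) (h1 : t ≤ 1) :
    (t : ℂ) * s ∈ kRect δ := by
  rw [mem_kRect] at hs ⊢
  simp only [Complex.re_ofReal_mul, Complex.im_ofReal_mul, abs_mul, abs_of_nonneg h0]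
  exact ⟨(mul_le_of_le_one_left (abs_nonneg _) h1).trans hs.1,
    (mul_le_of_le_one_left (abs_nonneg _) h1).trans hs.2⟩

/-- A local power bound at `0` extends to compact sets by boundedness away from `0`. -/
lemma bound_of_isBigO {K : Set ℂ} (hK : IsCompact K) {f : ℂ → ℂ} (hf : ContinuousOn f K) {k : ℕ}
    (h : f =O[𝓝 0] fun s => s ^ k) : ∃ C > 0, ∀ s ∈ K, ‖f s‖ ≤ C * ‖s‖ ^ k := by
  obtain ⟨c, hc, hb⟩ := h.exists_pos
  obtain ⟨r, hr, hb⟩ := Metric.eventually_nhds_iff.1 hb.bound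
  obtain ⟨M, hM⟩ := hK.exists_bound_of_continuousOn hf
  refine ⟨c + |M| / r ^ k, by positivity, fun s hs => ?_⟩
  rcases lt_or_ge ‖s‖ r with h1 | h1
  · have := hb (y := s) (by simpa using h1)
    rw [norm_pow] at this
    have h2 : 0 ≤ |M| / r ^ k * ‖s‖ ^ k := by positivity
    linarith
  · have h2 : r ^ k ≤ ‖s‖ ^ k := by gcongr
    have h3 : |M| ≤ |M| / r ^ k * ‖s‖ ^ k := by
      rw [div_mul_eq_mul_div, le_div_iff₀ (by positivity)]
      gcongr
    have h4 : 0 ≤ c * ‖s‖ ^ k := by positivity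
    linarith [hM s hs, le_abs_self M]

lemma lipschitz_at_zero {K : Set ℂ} (hK : IsCompact K) {g : ℂ → ℂ} (hg : ContinuousOn g K)
    (h0 : DifferentiableAt ℂ g 0) : ∃ C > 0, ∀ s ∈ K, ‖g s - g 0‖ ≤ C * ‖s‖ := by
  have := bound_of_isBigO hK (f := fun s => g s - g 0) (hg.sub continuousOn_const) (k := 1)
    (by simpa using h0.isBigO_sub)
  simpa using this

lemma zero_mem_uDom (A : ℝ) : (0 : ℂ) ∈ uDom A := by simp [uDom]

lemma sin_sq_sub_isBigO :
    (fun s : ℂ => Complex.sin s ^ 2 - s ^ 2) =O[𝓝 0] fun s => s ^ 3 := by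
  have h1 : (fun s : ℂ => Complex.sin s - s) =O[𝓝 0] fun s => s ^ 2 := by
    refine IsBigO.of_bound 1 ?_
    filter_upwards [Metric.ball_mem_nhds (0 : ℂ) one_pos] with s hs
    have hs : ‖s‖ < 1 := by simpa using hs
    have := Complex.sin_bound hs.le
    have h2 : Complex.sin s - s = (Complex.sin s - (s - s ^ 3 / 6)) - s ^ 3 / 6 := by ring
    rw [h2, norm_pow]
    refine (norm_sub_le _ _).trans ?_
    rw [norm_div, norm_pow]
    have h3 : ‖(6 : ℂ)‖ = 6 := by norm_num
    rw [h3]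
    have h4 : ‖s‖ ^ 5 ≤ ‖s‖ ^ 2 := pow_le_pow_of_le_one (norm_nonneg _) hs.le (by norm_num)
    have h5 : ‖s‖ ^ 3 ≤ ‖s‖ ^ 2 := pow_le_pow_of_le_one (norm_nonneg _) hs.le (by norm_num)
    nlinarith [sq_nonneg ‖s‖]
  have h2 : (fun s : ℂ => Complex.sin s) =O[𝓝 0] fun s => s := by
    simpa using (Complex.differentiable_sin 0).isBigO_sub
  have h3 := h1.mul (h2.add (isBigO_refl (fun s : ℂ => s) (𝓝 0)))
  refine (h3.congr (fun s => ?_) (fun s => ?_)) <;> ring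

/-- The phase is cubic at `0`: rationalizing, `hF = A (1 - A²) sin² s / (u (u + cos s))`, so its leading
term is `A (1 - A²) s² / 2`. -/
lemma hF_isBigO (A : ℝ) :
    (fun s : ℂ => hF A s - (A * (1 - A ^ 2) / 2 : ℝ) * s ^ 2) =O[𝓝 0] fun s => s ^ 3 := by
  set k : ℂ → ℂ := fun s => A * (1 - A ^ 2) / (uF A s * (uF A s + Complex.cos s)) with hk
  have hud := (uF_hasDerivAt (zero_mem_uDom A)).differentiableAt
  have hne0 : uF A 0 * (uF A 0 + Complex.cos 0) ≠ 0 := by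
    rw [uF_zero, Complex.cos_zero]; norm_num
  have hdd : DifferentiableAt ℂ (fun s => uF A s * (uF A s + Complex.cos s)) 0 :=
    hud.mul (hud.add (Complex.differentiable_cos 0))
  have hkd : DifferentiableAt ℂ k 0 := (differentiableAt_const _).div hdd hne0
  have hk0 : k 0 = (A * (1 - A ^ 2) / 2 : ℝ) := by
    simp [hk, uF_zero]; norm_num
  have h1 : (fun s => k s - k 0) =O[𝓝 0] fun s => s := by simpa using hkd.isBigO_sub
  have h2 : (fun s : ℂ => s ^ 2) =O[𝓝 0] fun s => s ^ 2 := isBigO_refl _ _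
  have h3 : k =O[𝓝 0] fun _ => (1 : ℂ) := hkd.continuousAt.isBigO_one _
  have h4 := (h3.mul sin_sq_sub_isBigO).add ((h1.mul h2).congr_right
    (g₂ := fun s => 1 * s ^ 3) (fun s => by ring))
  refine IsBigO.congr' h4 ?_ (Eventually.of_forall fun s => by ring)
  filter_upwards [(isOpen_uDom A).mem_nhds (zero_mem_uDom A),
    hdd.continuousAt.eventually_ne hne0] with s hs hne
  rw [← hk0]
  have hne2 : uF A s + Complex.cos s ≠ 0 := right_ne_zero_of_mul hne
  have : hF A s = k s * Complex.sin s ^ 2 := by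
    have hu := uF_ne A s
    simp only [hF, hk]
    field_simp
    have h5 := uF_sq hs
    have h6 := Complex.sin_sq_add_cos_sq s
    linear_combination (A : ℂ) * h5 - (A : ℂ) * h6
  rw [this]; ring

/-- Along the rectangle, `gF` agrees with the pure cubic exponential up to fourth order. -/
lemma gF_sub_cubic {A δ : ℝ} (hδ : 0 ≤ δ) (hK : kRect δ ⊆ uDom A) :
    ∃ C > 0, ∀ s ∈ kRect δ,
      ‖gF A s - Complex.exp (Complex.I * (A * (1 - A ^ 2) / 6 : ℝ) * s ^ 3)‖ ≤ C * ‖s‖ ^ 4 := by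
  have hH : ContinuousOn (hF A) (kRect δ) := (hF_differentiableOn A).continuousOn.mono hK
  obtain ⟨C₁, hC₁, hb₁⟩ := bound_of_isBigO (kRect_compact δ)
    (f := fun s : ℂ => hF A s - (A * (1 - A ^ 2) / 2 : ℝ) * s ^ 2) (hH.sub (by fun_prop))
    (hF_isBigO A)
  set e : ℂ → ℂ := fun s => Complex.exp (-(Complex.I * (A * (1 - A ^ 2) / 6 : ℝ) * s ^ 3)) with he
  set f : ℂ → ℂ := fun s => gF A s * e s with hf
  have hed : ∀ s, HasDerivAt e (e s * (-(Complex.I * (A * (1 - A ^ 2) / 2 : ℝ) * s ^ 2))) s := by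
    intro s
    have := (((hasDerivAt_id s).pow 3).const_mul (Complex.I * (A * (1 - A ^ 2) / 6 : ℝ))).neg.cexp
    refine this.congr_deriv ?_
    simp only [he]
    push_cast
    simp
    ring
  have hfd : ∀ s ∈ kRect δ, HasDerivAt f
      (Complex.I * (hF A s - (A * (1 - A ^ 2) / 2 : ℝ) * s ^ 2) * f s) s := by
    intro s hs
    refine ((gF_hasDerivAt (hK hs)).mul (hed s)).congr_deriv ?_
    simp only [hf]; ring
  have hfc : ContinuousOn f (kRect δ) := fun s hs => (hfd s hs).continuousAt.continuousWithinAt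
  obtain ⟨M, hM⟩ := (kRect_compact δ).exists_bound_of_continuousOn hfc
  have hec : ContinuousOn (fun s : ℂ => Complex.exp (Complex.I * (A * (1 - A ^ 2) / 6 : ℝ) * s ^ 3))
    (kRect δ) := by fun_prop
  obtain ⟨N, hN⟩ := (kRect_compact δ).exists_bound_of_continuousOn hec
  have h0 : (0 : ℂ) ∈ kRect δ := by
    rw [mem_kRect]; simp [Real.pi_pos.le, hδ]
  have hM0 : 0 ≤ M := (norm_nonneg _).trans (hM 0 h0)
  have hN0 : 0 ≤ N := (norm_nonneg _).trans (hN 0 h0)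
  have hf0 : f 0 = 1 := by simp [hf, he, gF_zero]
  refine ⟨N * (C₁ * M) + 1, by positivity, fun s hs => ?_⟩
  have hmv : ‖f s - f 0‖ ≤ (C₁ * ‖s‖ ^ 3 * M) * ‖s - 0‖ := by
    refine Convex.norm_image_sub_le_of_norm_hasDerivWithin_le (s := segment ℝ 0 s)
      (f' := fun s => (Complex.I * (hF A s - (A * (1 - A ^ 2) / 2 : ℝ) * s ^ 2) * f s))
      ?_ ?_ (convex_segment _ _) (left_mem_segment _ _ _) (right_mem_segment _ _ _)
    · intro w hw
      rw [segment_eq_image] at hw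
      obtain ⟨t, ht, rfl⟩ := hw
      have := kRect_smul hs ht.1 ht.2
      exact (hfd _ (by simpa using this)).hasDerivWithinAt
    · intro w hw
      rw [segment_eq_image] at hw
      obtain ⟨t, ht, rfl⟩ := hw
      have hm := kRect_smul hs ht.1 ht.2
      have hw : ((1 - t) • (0 : ℂ) + t • s) = t * s := by simp
      simp only [hw]
      rw [norm_mul, norm_mul, Complex.norm_I, one_mul]
      have h1 := hb₁ _ hm
      have h2 := hM _ hm
      have h3 : ‖(t : ℂ) * s‖ ≤ ‖s‖ := by
        rw [norm_mul, Complex.norm_real, Real.norm_of_nonneg ht.1]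
        exact mul_le_of_le_one_left (norm_nonneg _) ht.2
      have h4 : C₁ * ‖(t : ℂ) * s‖ ^ 3 ≤ C₁ * ‖s‖ ^ 3 := by gcongr
      exact mul_le_mul (h1.trans h4) h2 (norm_nonneg _) (by positivity)
  rw [hf0, sub_zero] at hmv
  have hee : Complex.exp (Complex.I * (A * (1 - A ^ 2) / 6 : ℝ) * s ^ 3) * e s = 1 := by
    rw [he, ← Complex.exp_add, add_neg_cancel, Complex.exp_zero]
  have : gF A s - Complex.exp (Complex.I * (A * (1 - A ^ 2) / 6 : ℝ) * s ^ 3) =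
      Complex.exp (Complex.I * (A * (1 - A ^ 2) / 6 : ℝ) * s ^ 3) * (f s - 1) := by
    simp only [hf]
    linear_combination (-gF A s) * hee
  rw [this, norm_mul]
  have h5 := hN s hs
  calc _ ≤ N * (C₁ * ‖s‖ ^ 3 * M * ‖s‖) := by gcongr
    _ = N * (C₁ * M) * ‖s‖ ^ 4 := by ring
    _ ≤ _ := by gcongr; linarith

/-! ### Decay above the real axis -/

lemma ofReal_mem_uDom {A : ℝ} (h0 : 0 < A) (h1 : A < 1) (x : ℝ) : (x : ℂ) ∈ uDom A := by
  obtain ⟨δ, hδ, h⟩ := exists_strip h0 h1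
  exact h x (by simp [hδ.le])

lemma hF_ofReal {A : ℝ} (h0 : 0 < A) (h1 : A < 1) (x : ℝ) :
    hF A x = (A * (1 - Real.cos x / Real.sqrt (1 - A ^ 2 * Real.sin x ^ 2)) : ℝ) := by
  rw [hF, uF_ofReal (ofReal_mem_uDom h0 h1 x)]
  push_cast; rfl

/-- On the real axis the only zero of `hF` in `[-π, π]` is the double zero at `0`, quantitatively. -/
lemma hF_real_lower {A : ℝ} (h0 : 0 < A) (h1 : A < 1) {x : ℝ} (hx : |x| ≤ Real.pi) :
    A * (1 - A ^ 2) / Real.pi ^ 2 * x ^ 2 ≤ (hF A x).re := by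
  rw [hF_ofReal h0 h1, Complex.ofReal_re]
  have hpi := Real.pi_pos
  have hs := Real.sin_sq_add_cos_sq x
  set D := 1 - A ^ 2 * Real.sin x ^ 2 with hD
  have hA2 : A ^ 2 < 1 := by nlinarith
  have hDpos : 0 < D := by nlinarith [Real.sin_sq_le_one x, sq_nonneg (Real.sin x)]
  have hD1 : D ≤ 1 := by nlinarith [mul_nonneg (sq_nonneg A) (sq_nonneg (Real.sin x))]
  set r := Real.sqrt D with hr
  have hrpos : 0 < r := Real.sqrt_pos.2 hDpos
  have hr2 : r ^ 2 = D := Real.sq_sqrt hDpos.le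
  have hr1 : r ≤ 1 := by nlinarith
  rw [mul_div_assoc, mul_assoc]
  refine mul_le_mul_of_nonneg_left ?_ h0.le
  have hxp : x ^ 2 / Real.pi ^ 2 ≤ 1 := by
    rw [div_le_one (by positivity)]
    exact sq_le_sq.2 (by rwa [abs_of_pos hpi])
  rw [div_mul_eq_mul_div, mul_div_assoc]
  have hxp0 : 0 ≤ x ^ 2 / Real.pi ^ 2 := by positivity
  rcases le_or_gt |x| (Real.pi / 2) with h | h
  · have hc : 0 ≤ Real.cos x := Real.cos_nonneg_of_mem_Icc (by
      rw [abs_le] at h; constructor <;> linarith [h.1, h.2])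
    have hsin : 2 / Real.pi * |x| ≤ |Real.sin x| := Real.mul_abs_le_abs_sin h
    have hsin2 : 4 * (x ^ 2 / Real.pi ^ 2) ≤ Real.sin x ^ 2 := by
      have := mul_self_le_mul_self (by positivity) hsin
      rw [← sq_abs (Real.sin x), ← sq_abs x]
      calc _ = (2 / Real.pi * |x|) * (2 / Real.pi * |x|) := by ring
        _ ≤ _ := by rw [sq]; exact this
    rw [le_sub_comm, div_le_iff₀ hrpos]
    have hkey : Real.cos x ^ 2 = r ^ 2 - (1 - A ^ 2) * Real.sin x ^ 2 := by
      rw [hr2, hD]; linarith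
    have hs1 := Real.sin_sq_le_one x
    set q := (1 - A ^ 2) * (x ^ 2 / Real.pi ^ 2) with hq
    have hq4 : 4 * q ≤ (1 - A ^ 2) * Real.sin x ^ 2 := by
      rw [hq]; nlinarith
    have hq0 : 0 ≤ q := mul_nonneg (by linarith) hxp0
    have hq1 : q ≤ 1 / 4 := by nlinarith [sq_nonneg (Real.sin x), mul_nonneg (sq_nonneg A) (sq_nonneg (Real.sin x))]
    refine abs_le_of_sq_le_sq' (a := Real.cos x) (b := (1 - q) * r) ?_ ?_ |>.2
    · rw [hkey]
      have : r ^ 2 ≤ 1 := by nlinarith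
      nlinarith [mul_nonneg hq0 (sub_nonneg.2 this), mul_nonneg (sq_nonneg q) (sq_nonneg r)]
    · exact mul_nonneg (by linarith) hrpos.le
  · have hc : Real.cos x ≤ 0 := by
      rw [← Real.cos_abs]
      exact Real.cos_nonpos_of_pi_div_two_le_of_le h.le (by linarith)
    have : Real.cos x / r ≤ 0 := div_nonpos_of_nonpos_of_nonneg hc hrpos.le
    nlinarith [sq_nonneg A, mul_nonneg (sq_nonneg A) hxp0]

lemma norm_gF_ofReal {A : ℝ} (h0 : 0 < A) (h1 : A < 1) (x : ℝ) : ‖gF A x‖ = 1 := by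
  have hA2 : A ^ 2 < 1 := by nlinarith
  have hDpos : 0 < 1 - A ^ 2 * Real.sin x ^ 2 := by
    nlinarith [Real.sin_sq_le_one x, sq_nonneg (Real.sin x)]
  rw [gF, norm_mul, fF, uF_ofReal (ofReal_mem_uDom h0 h1 x)]
  have e1 : Complex.I * A * x = ((A * x : ℝ) : ℂ) * Complex.I := by push_cast; ring
  rw [e1, Complex.norm_exp_ofReal_mul_I, one_mul]
  have e2 : ((Real.sqrt (1 - A ^ 2 * Real.sin x ^ 2) : ℝ) : ℂ) - Complex.I * A * Complex.sin x
      = ⟨Real.sqrt (1 - A ^ 2 * Real.sin x ^ 2), -(A * Real.sin x)⟩ := by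
    apply Complex.ext <;> simp [← Complex.ofReal_sin]
  rw [e2, Complex.norm_def, Complex.normSq_mk]
  rw [← sq, Real.sq_sqrt hDpos.le]
  rw [Real.sqrt_eq_one]; ring

lemma hasDerivAt_vertical {f : ℂ → ℂ} {f' : ℂ} {x τ : ℝ} (h : HasDerivAt f f' (x + τ * Complex.I)) :
    HasDerivAt (fun τ : ℝ => f (x + τ * Complex.I)) (f' * Complex.I) τ := by
  have h1 : HasDerivAt (fun τ : ℝ => (x : ℂ) + τ * Complex.I) (Complex.I) τ := by
    simpa using ((hasDerivAt_id τ).ofReal_comp.mul_const Complex.I).const_add (x : ℂ)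
  exact h.comp τ h1

lemma hasDerivAt_re {f : ℝ → ℂ} {f' : ℂ} {τ : ℝ} (h : HasDerivAt f f' τ) :
    HasDerivAt (fun τ => (f τ).re) f'.re τ :=
  (Complex.reCLM.hasFDerivAt.comp_hasDerivAt τ h)

lemma hasDerivAt_im {f : ℝ → ℂ} {f' : ℂ} {τ : ℝ} (h : HasDerivAt f f' τ) :
    HasDerivAt (fun τ => (f τ).im) f'.im τ :=
  (Complex.imCLM.hasFDerivAt.comp_hasDerivAt τ h)

lemma mem_kRect_vert {δ x τ : ℝ} (hx : |x| ≤ Real.pi) (h0 : 0 ≤ τ) (h1 : τ ≤ δ) :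
    (x + τ * Complex.I : ℂ) ∈ kRect δ := by
  rw [mem_kRect]; simp [hx, abs_of_nonneg h0, h1]

/-- `Re hF` changes only quadratically in the vertical direction, because `hF` is real on the real
axis. -/
lemma hF_re_lower {A δ : ℝ} (h0 : 0 < A) (h1 : A < 1) (hK : kRect δ ⊆ uDom A) :
    ∃ C > 0, ∀ x τ : ℝ, |x| ≤ Real.pi → 0 ≤ τ → τ ≤ δ →
      A * (1 - A ^ 2) / Real.pi ^ 2 * x ^ 2 - C * τ ^ 2 ≤ (hF A (x + τ * Complex.I)).re := by
  have hd0 := hF_differentiableOn A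
  have hd1 := hd0.deriv (isOpen_uDom A)
  have hd2 := hd1.deriv (isOpen_uDom A)
  obtain ⟨M, hM⟩ := (kRect_compact δ).exists_bound_of_continuousOn (hd2.continuousOn.mono hK)
  have hder0 : ∀ s ∈ kRect δ, HasDerivAt (hF A) (deriv (hF A) s) s := fun s hs =>
    (hd0.differentiableAt ((isOpen_uDom A).mem_nhds (hK hs))).hasDerivAt
  have hder1 : ∀ s ∈ kRect δ, HasDerivAt (deriv (hF A)) (deriv (deriv (hF A)) s) s := fun s hs =>
    (hd1.differentiableAt ((isOpen_uDom A).mem_nhds (hK hs))).hasDerivAt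
  refine ⟨|M| + 1, by positivity, fun x τ hx hτ0 hτ => ?_⟩
  have hreal : (deriv (hF A) x).im = 0 := by
    have hs : HasDerivAt (hF A) (deriv (hF A) x) x :=
      (hd0.differentiableAt ((isOpen_uDom A).mem_nhds (ofReal_mem_uDom h0 h1 x))).hasDerivAt
    have h2 := hasDerivAt_im hs.comp_ofReal
    have h3 : (fun y : ℝ => (hF A y).im) = fun _ => 0 := by
      funext y; rw [hF_ofReal h0 h1, Complex.ofReal_im]
    rw [h3] at h2
    exact h2.unique (hasDerivAt_const _ _)
  have himb : ∀ t ∈ Set.Icc 0 δ, |(deriv (hF A) (x + t * Complex.I)).im| ≤ |M| * t := by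
    intro t ht
    have := Convex.norm_image_sub_le_of_norm_hasDerivWithin_le (s := Set.Icc 0 δ) (x := 0) (y := t)
      (f := fun t : ℝ => deriv (hF A) (x + t * Complex.I)) (C := |M|)
      (fun t ht => (hasDerivAt_vertical
        (hder1 _ (mem_kRect_vert hx ht.1 ht.2))).hasDerivWithinAt)
      (fun t ht => by
        rw [norm_mul, Complex.norm_I, mul_one]
        exact (hM _ (mem_kRect_vert hx ht.1 ht.2)).trans (le_abs_self M))
      (convex_Icc _ _) ⟨le_rfl, hτ0.trans hτ⟩ ht
    have h2 := (Complex.abs_im_le_norm _).trans this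
    simpa [hreal, abs_of_nonneg ht.1] using h2
  have hmono : MonotoneOn (fun t : ℝ => (hF A (x + t * Complex.I)).re + (|M| + 1) * t ^ 2)
      (Set.Icc 0 δ) := by
    have hder : ∀ t ∈ Set.Icc 0 δ, HasDerivAt
        (fun t : ℝ => (hF A (x + t * Complex.I)).re + (|M| + 1) * t ^ 2)
        (-(deriv (hF A) (x + t * Complex.I)).im + (|M| + 1) * (2 * t)) t := by
      intro t ht
      have h2 := hasDerivAt_re (hasDerivAt_vertical (hder0 _ (mem_kRect_vert hx ht.1 ht.2)))
      have h3 := ((hasDerivAt_id t).pow 2).const_mul (|M| + 1)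
      refine (h2.add h3).congr_deriv ?_
      simp
    refine monotoneOn_of_deriv_nonneg (convex_Icc _ _)
      (fun t ht => (hder t ht).continuousAt.continuousWithinAt)
      (fun t ht => (hder t (interior_subset ht)).differentiableAt.differentiableWithinAt) ?_
    intro t ht
    have ht := interior_subset ht
    rw [(hder t ht).deriv]
    have h5 := le_of_abs_le (himb t ht)
    nlinarith [ht.1, abs_nonneg M, mul_nonneg (abs_nonneg M) ht.1]
  have h6 := hmono ⟨le_rfl, hτ0.trans hτ⟩ ⟨hτ0, hτ⟩ hτ0
  have h7 := hF_real_lower h0 h1 hx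
  simp at h6
  linarith

/-- Above the real axis `|gF|` has Gaussian decay in `Re s`, up to a cubic error in `Im s`. -/
lemma norm_gF_le {A δ : ℝ} (h0 : 0 < A) (h1 : A < 1) (hK : kRect δ ⊆ uDom A) :
    ∃ C > 0, ∀ x τ : ℝ, |x| ≤ Real.pi → 0 ≤ τ → τ ≤ δ →
      ‖gF A (x + τ * Complex.I)‖ ≤
        Real.exp (-(A * (1 - A ^ 2) / Real.pi ^ 2) * x ^ 2 * τ + C * τ ^ 3) := by
  obtain ⟨C, hC, hb⟩ := hF_re_lower h0 h1 hK
  refine ⟨C, hC, fun x τ hx hτ0 hτ => ?_⟩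
  set c := A * (1 - A ^ 2) / Real.pi ^ 2
  have hanti : AntitoneOn (fun t : ℝ => ‖gF A (x + t * Complex.I)‖ ^ 2 *
      Real.exp (2 * c * x ^ 2 * t - 2 * C * t ^ 3)) (Set.Icc 0 δ) := by
    have hder : ∀ t ∈ Set.Icc 0 δ, HasDerivAt (fun t : ℝ => ‖gF A (x + t * Complex.I)‖ ^ 2 *
      Real.exp (2 * c * x ^ 2 * t - 2 * C * t ^ 3))
        ((‖gF A (x + t * Complex.I)‖ ^ 2 * Real.exp (2 * c * x ^ 2 * t - 2 * C * t ^ 3)) *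
        (-2 * (hF A (x + t * Complex.I)).re + (2 * c * x ^ 2 - 2 * C * (3 * t ^ 2)))) t := by
      intro t ht
      have h2 := (hasDerivAt_vertical
        (gF_hasDerivAt (hK (mem_kRect_vert hx ht.1 ht.2)))).norm_sq
      have h3 := (((hasDerivAt_id t).const_mul (2 * c * x ^ 2)).sub
        (((hasDerivAt_id t).pow 3).const_mul (2 * C))).exp
      refine (h2.mul h3).congr_deriv ?_
      set H := hF A (x + t * Complex.I)
      set G := gF A (x + t * Complex.I)
      have h4 : inner ℝ G (Complex.I * H * G * Complex.I) = -H.re * ‖G‖ ^ 2 := by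
        have : Complex.I * H * G * Complex.I = -(H * G) := by
          linear_combination H * G * Complex.I_sq
        rw [this, Complex.inner, ← Complex.normSq_eq_norm_sq, Complex.normSq_apply]
        simp; ring
      rw [h4]
      simp
      ring
    refine antitoneOn_of_deriv_nonpos (convex_Icc _ _)
      (fun t ht => (hder t ht).continuousAt.continuousWithinAt)
      (fun t ht => (hder t (interior_subset ht)).differentiableAt.differentiableWithinAt) ?_
    intro t ht
    have ht := interior_subset ht
    rw [(hder t ht).deriv]
    have h5 := hb x t hx ht.1 ht.2
    refine mul_nonpos_of_nonneg_of_nonpos (by positivity) ?_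
    nlinarith [sq_nonneg t]
  have h6 := hanti ⟨le_rfl, hτ0.trans hτ⟩ ⟨hτ0, hτ⟩ hτ0
  simp [norm_gF_ofReal h0 h1] at h6
  refine abs_le_of_sq_le_sq' ?_ (Real.exp_pos _).le |>.2
  rw [← Real.exp_nat_mul]
  have h7 := mul_le_mul_of_nonneg_right h6
    (Real.exp_pos (-(2 * c * x ^ 2 * τ - 2 * C * τ ^ 3))).le
  rw [mul_assoc, ← Real.exp_add, add_neg_cancel, Real.exp_zero, mul_one, one_mul] at h7
  refine h7.trans (le_of_eq ?_)
  congr 1; push_cast; ring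

/-! ### The Airy function on a shifted contour -/

/-- The Airy integrand `e^{i(z³/3 + z x)}`. -/
def airyE (x : ℝ) (z : ℂ) : ℂ := Complex.exp (Complex.I * (z ^ 3 / 3 + z * x))

lemma norm_airyE (x t τ : ℝ) :
    ‖airyE x (t + τ * Complex.I)‖ = Real.exp (-t ^ 2 * τ + τ ^ 3 / 3 - τ * x) := by
  rw [airyE, Complex.norm_exp]
  congr 1
  have : Complex.I * (((t : ℂ) + τ * Complex.I) ^ 3 / 3 + (t + τ * Complex.I) * x) =
    ((-t ^ 2 * τ + τ ^ 3 / 3 - τ * x : ℝ) : ℂ) +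
      ((t ^ 3 / 3 - t * τ ^ 2 + t * x : ℝ) : ℂ) * Complex.I := by
    push_cast
    have h := Complex.I_sq
    have h4 : Complex.I ^ 4 = 1 := Complex.I_pow_four
    have h3 : Complex.I ^ 3 = -Complex.I := Complex.I_pow_three
    ring_nf
    rw [h4, h3, h]; ring
  rw [this, Complex.add_re, Complex.ofReal_re, Complex.re_ofReal_mul, Complex.I_re, mul_zero, add_zero]

lemma continuous_airyE (x : ℝ) : Continuous (airyE x) := by unfold airyE; fun_prop

lemma norm_airyE_one (x t : ℝ) :
    ‖airyE x (t + Complex.I)‖ = Real.exp (1 / 3 - x) * Real.exp (-1 * t ^ 2) := by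
  have := norm_airyE x t 1
  simp only [Complex.ofReal_one, one_mul] at this
  rw [this, ← Real.exp_add]
  congr 1; ring

lemma integrable_airyE (x : ℝ) : Integrable (fun t : ℝ => airyE x (t + Complex.I)) := by
  have h := (integrable_exp_neg_mul_sq one_pos).const_mul (Real.exp (1 / 3 - x))
  refine h.mono' ((continuous_airyE x).comp (by fun_prop)).aestronglyMeasurable ?_
  exact Eventually.of_forall fun t => (norm_airyE_one x t).le

/-- The integrals over the vertical sides `Re z = R`, `0 ≤ Im z ≤ 1` vanish as `|R| → ∞`. -/
lemma airy_vertical (x : ℝ) {l : Filter ℝ} [l.IsCountablyGenerated]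
    (hl : Tendsto (fun R : ℝ => R ^ 2) l atTop) :
    Tendsto (fun R : ℝ => ∫ τ in (0 : ℝ)..1, airyE x (R + τ * Complex.I)) l (𝓝 0) := by
  have h0 : (∫ τ in (0 : ℝ)..1, (0 : ℂ)) = 0 := by simp
  rw [← h0]
  refine intervalIntegral.tendsto_integral_filter_of_dominated_convergence
    (fun _ => Real.exp (1 / 3 + |x|)) ?_ ?_ ?_ ?_
  · exact Eventually.of_forall fun R =>
      ((continuous_airyE x).comp (by fun_prop)).aestronglyMeasurable
  · refine Eventually.of_forall fun R => Eventually.of_forall fun τ hτ => ?_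
    rw [Set.uIoc_of_le zero_le_one] at hτ
    rw [norm_airyE, Real.exp_le_exp]
    have h1 : τ ^ 3 ≤ 1 := pow_le_one₀ hτ.1.le hτ.2
    have h2 : -(τ * x) ≤ |x| := by
      have := neg_abs_le x
      nlinarith [abs_nonneg x, hτ.1, hτ.2]
    nlinarith [mul_nonneg (sq_nonneg R) hτ.1.le]
  · simp
  · refine Eventually.of_forall fun τ hτ => ?_
    rw [Set.uIoc_of_le zero_le_one] at hτ
    rw [tendsto_zero_iff_norm_tendsto_zero]
    simp only [norm_airyE]
    refine Real.tendsto_exp_atBot.comp ?_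
    have : Tendsto (fun R : ℝ => -(R ^ 2 * τ) + (τ ^ 3 / 3 - τ * x)) l atBot :=
      tendsto_atBot_add_const_right _ _
        (tendsto_neg_atTop_atBot.comp (hl.atTop_mul_const hτ.1))
    refine this.congr fun R => by ring

/-- The improper Airy integral converges, and equals the absolutely convergent integral over the
line `Im z = 1`. -/
lemma Ai_eq (x : ℝ) :
    Ai x = ((1 / (2 * Real.pi) : ℝ) : ℂ) * ∫ t : ℝ, airyE x (t + Complex.I) := by
  rw [Ai]
  congr 1
  refine Tendsto.limUnder_eq ?_
  have h1 : Tendsto (fun R : ℝ => ∫ t in (-R)..R, airyE x (t + Complex.I)) atTop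
      (𝓝 (∫ t : ℝ, airyE x (t + Complex.I))) :=
    intervalIntegral_tendsto_integral (integrable_airyE x) tendsto_neg_atTop_atBot tendsto_id
  have hsq : Tendsto (fun R : ℝ => R ^ 2) atTop atTop := tendsto_pow_atTop two_ne_zero
  have h2 := airy_vertical x hsq
  have h3 : Tendsto (fun R : ℝ => ∫ τ in (0 : ℝ)..1, airyE x ((-R : ℝ) + τ * Complex.I)) atTop
      (𝓝 0) := by
    have hb : Tendsto (fun R : ℝ => R ^ 2) atBot atTop := by
      refine (hsq.comp tendsto_neg_atBot_atTop).congr fun R => by simp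
    exact (airy_vertical x hb).comp tendsto_neg_atTop_atBot
  have h4 := (h1.sub (h2.const_mul Complex.I)).add (h3.const_mul Complex.I)
  simp only [mul_zero, sub_zero, add_zero] at h4
  refine h4.congr fun R => ?_
  have h5 := Complex.integral_boundary_rect_eq_zero_of_differentiableOn (airyE x) (-R : ℝ)
    (R + Complex.I) (by unfold airyE; fun_prop)
  simp at h5
  change _ = ∫ t in (-R)..R, airyE x t
  simp only [Complex.ofReal_neg]
  linear_combination -h5

lemma norm_Ai_le (x : ℝ) : ‖Ai x‖ ≤ Real.exp (1 / 3 - x) := by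
  rw [Ai_eq, norm_mul, Complex.norm_real, Real.norm_of_nonneg (by positivity)]
  have h1 : ‖∫ t : ℝ, airyE x (t + Complex.I)‖ ≤ Real.exp (1 / 3 - x) * Real.sqrt Real.pi := by
    refine (norm_integral_le_integral_norm _).trans (le_of_eq ?_)
    simp only [norm_airyE_one]
    rw [integral_const_mul, integral_gaussian, div_one]
  have h2 : Real.sqrt Real.pi ≤ 2 * Real.pi := by
    rw [Real.sqrt_le_left (by positivity)]
    nlinarith [Real.pi_gt_three]
  calc _ ≤ 1 / (2 * Real.pi) * (Real.exp (1 / 3 - x) * (2 * Real.pi)) := by gcongr; exact h1.trans (by gcongr)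
    _ = _ := by field_simp

/-! ### Uniform Airy asymptotics of the oscillatory integral -/

lemma norm_pow_sub_pow_le {z w : ℂ} {r : ℝ} (hz : ‖z‖ ≤ r) (hw : ‖w‖ ≤ r) (n : ℕ) :
    ‖z ^ n - w ^ n‖ ≤ n * ‖z - w‖ * r ^ (n - 1) := by
  have hr : 0 ≤ r := (norm_nonneg _).trans hz
  induction n with
  | zero => simp
  | succ n ih =>
    rcases Nat.eq_zero_or_pos n with rfl | hn
    · simp
    have h1 : z ^ (n + 1) - w ^ (n + 1) = z * (z ^ n - w ^ n) + (z - w) * w ^ n := by ring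
    rw [h1]
    refine (norm_add_le _ _).trans ?_
    rw [norm_mul, norm_mul, norm_pow]
    have h2 : r ^ n = r * r ^ (n - 1) := by rw [← pow_succ', Nat.sub_add_cancel hn]
    calc _ ≤ r * (n * ‖z - w‖ * r ^ (n - 1)) + ‖z - w‖ * r ^ n := by gcongr
      _ = _ := by rw [Nat.add_sub_cancel, h2]; push_cast; ring

/-- Periodicity makes the vertical sides of the rectangle cancel. -/
lemma contour_shift {Φ : ℂ → ℂ} {U : Set ℂ} {δ η : ℝ} (hK : kRect δ ⊆ U)
    (hd : DifferentiableOn ℂ Φ U) (hp : ∀ s, Φ (s + 2 * Real.pi) = Φ s) (h0 : 0 ≤ η) (h1 : η ≤ δ) :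
    ∫ x in (-Real.pi)..Real.pi, Φ x = ∫ x in (-Real.pi)..Real.pi, Φ (x + η * Complex.I) := by
  have h := Complex.integral_boundary_rect_eq_zero_of_differentiableOn Φ (-Real.pi : ℝ)
    (Real.pi + η * Complex.I) (hd.mono (by
      refine Set.Subset.trans ?_ hK
      intro s hs
      have hpi := Real.pi_pos
      simp only [Complex.mem_reProdIm, Complex.ofReal_re, Complex.ofReal_im, Complex.add_re,
        Complex.add_im, Complex.mul_re, Complex.mul_im, Complex.I_re, Complex.I_im] at hs
      simp only [mul_zero, mul_one, sub_zero, add_zero, zero_add] at hs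
      rw [Set.uIcc_of_le (by linarith), Set.uIcc_of_le h0] at hs
      rw [mem_kRect, abs_le, abs_le]
      exact ⟨hs.1, by linarith [hs.2.1], by linarith [hs.2.2]⟩))
  simp at h
  have h3 : ∀ t : ℝ, Φ (Real.pi + t * Complex.I) = Φ (-Real.pi + t * Complex.I) := by
    intro t
    rw [← hp (-Real.pi + t * Complex.I)]
    congr 1; ring
  simp only [h3] at h
  linear_combination h

/-- The linear part `n A s` of the phase is moved from the frequency `y` to the factor `gF`. -/
lemma exp_I_split (A : ℝ) (n : ℕ) (y : ℤ) (s : ℂ) :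
    Complex.exp (Complex.I * y * s) * fF A s ^ n =
      Complex.exp (Complex.I * ((y - n * A : ℝ) : ℂ) * s) * gF A s ^ n := by
  rw [gF, mul_pow, ← Complex.exp_nat_mul, ← mul_assoc, ← Complex.exp_add]
  congr 2
  push_cast; ring

lemma sq_mul_exp_le {v : ℝ} (hv : 0 ≤ v) {c : ℝ} (hc : 0 < c) :
    (1 + v) ^ 2 * Real.exp (-c * v) ≤ (1 + 4 / c) ^ 2 * Real.exp (-(c / 2) * v) := by
  have h1 : 1 + v ≤ (1 + 4 / c) * Real.exp (c / 4 * v) := by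
    have h2 : c / 4 * v + 1 ≤ Real.exp (c / 4 * v) := Real.add_one_le_exp _
    have h3 : (1 + 4 / c) * (c / 4 * v + 1) = 1 + v + (c / 4 * v + 4 / c) := by
      field_simp; ring
    have h4 : 0 ≤ c / 4 * v + 4 / c := by positivity
    calc 1 + v ≤ (1 + 4 / c) * (c / 4 * v + 1) := by rw [h3]; linarith
      _ ≤ _ := by gcongr
  have h5 : (1 + v) ^ 2 ≤ ((1 + 4 / c) * Real.exp (c / 4 * v)) ^ 2 := by gcongr
  calc _ ≤ ((1 + 4 / c) * Real.exp (c / 4 * v)) ^ 2 * Real.exp (-c * v) := by gcongr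
    _ = (1 + 4 / c) ^ 2 * (Real.exp (c / 4 * v) ^ 2 * Real.exp (-c * v)) := by ring
    _ = _ := by
      rw [← Real.exp_nat_mul, ← Real.exp_add]
      congr 2; push_cast; ring

lemma norm_xi_add_I_sq (ξ : ℝ) : ‖(ξ : ℂ) + Complex.I‖ ^ 2 = 1 + ξ ^ 2 := by
  rw [← Complex.normSq_eq_norm_sq, Complex.normSq_apply]
  simp; ring

set_option maxHeartbeats 1000000 in
/-- Inside the rectangle, on the line `Im s = κ` in the rescaled variable `s = κ (ξ + i)`, the
integrand is close to the Airy integrand. -/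
lemma pointwise_inside {A : ℝ} (h0 : 0 < A) (h1 : A < 1) {g : ℂ → ℂ} {δ : ℝ} (hδ : 0 < δ)
    (hK : kRect δ ⊆ uDom A) (hg : DifferentiableOn ℂ g (uDom A)) (D : ℝ) :
    ∃ K > 0, ∀ (n : ℕ) (κ d ξ : ℝ), 2 ≤ n → 0 < κ → κ ≤ δ → n * κ ^ 3 = 2 / (A * (1 - A ^ 2)) →
      |κ * d| ≤ D → |κ * ξ| ≤ Real.pi →
      ‖Complex.exp (Complex.I * d * (κ * (ξ + Complex.I))) * gF A (κ * (ξ + Complex.I)) ^ n *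
          g (κ * (ξ + Complex.I)) - g 0 * airyE (κ * d) (ξ + Complex.I)‖ ≤
        κ * (K * ((1 + ξ ^ 2) ^ 2 * Real.exp (-(1 / Real.pi ^ 2) * ξ ^ 2))) := by
  obtain ⟨L, hL, hgL⟩ := lipschitz_at_zero (kRect_compact δ) (hg.continuousOn.mono hK)
    (hg.differentiableAt ((isOpen_uDom A).mem_nhds (zero_mem_uDom A)))
  obtain ⟨C₄, hC₄, hG4⟩ := gF_sub_cubic hδ.le hK
  obtain ⟨C, hC, hGn⟩ := norm_gF_le h0 h1 hK
  have hpi := Real.pi_gt_three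
  have hB : 0 < 1 - A ^ 2 := by nlinarith
  set W := 2 / (A * (1 - A ^ 2)) with hW
  have hWpos : 0 < W := by positivity
  set c₀ := A * (1 - A ^ 2) / 6 with hc₀
  have hc₀pos : 0 < c₀ := by positivity
  set c := A * (1 - A ^ 2) / Real.pi ^ 2 with hc
  have hcW : c * W = 2 / Real.pi ^ 2 := by rw [hc, hW]; field_simp
  have hc₀W : c₀ * W = 1 / 3 := by rw [hc₀, hW]; field_simp; norm_num
  have hcc : c ≤ 3 * c₀ := by
    rw [hc, hc₀, div_le_iff₀ (by positivity)]
    have : 0 < A * (1 - A ^ 2) := by positivity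
    nlinarith [mul_pos this (by positivity : 0 < Real.pi)]
  have hcpos : 0 < c := by positivity
  refine ⟨Real.exp D * Real.exp ((C + c₀) * W) * (L + ‖g 0‖ * (C₄ * W)), by positivity, ?_⟩
  intro n κ d ξ hn hκ hκδ hnκ hdκ hξ
  set s : ℂ := κ * (ξ + Complex.I) with hs
  have hs' : s = ((κ * ξ : ℝ) : ℂ) + (κ : ℝ) * Complex.I := by rw [hs]; push_cast; ring
  have hsK : s ∈ kRect δ := by rw [hs']; exact mem_kRect_vert hξ hκ.le hκδ
  have hsn : ‖s‖ = κ * ‖(ξ : ℂ) + Complex.I‖ := by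
    rw [hs, norm_mul, Complex.norm_real, Real.norm_of_nonneg hκ.le]
  set m := ‖(ξ : ℂ) + Complex.I‖ with hm
  have hm2 : m ^ 2 = 1 + ξ ^ 2 := norm_xi_add_I_sq ξ
  have hm0 : 0 ≤ m := norm_nonneg _
  have hm1 : 1 ≤ m := by nlinarith [sq_nonneg ξ]
  set ρ := Real.exp (-c * (κ * ξ) ^ 2 * κ + (C + c₀) * κ ^ 3) with hρ
  have hκ3 : 0 < κ ^ 3 := by positivity
  have hGρ : ‖gF A s‖ ≤ ρ := by
    rw [hs']
    refine (hGn _ _ hξ hκ.le hκδ).trans ?_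
    rw [hρ, Real.exp_le_exp]
    nlinarith
  set E := Complex.exp (Complex.I * (c₀ : ℝ) * s ^ 3) with hE
  have hEρ : ‖E‖ ≤ ρ := by
    rw [hE, Complex.norm_exp, hρ, Real.exp_le_exp]
    have : Complex.I * (c₀ : ℝ) * s ^ 3 =
        ((-(3 * c₀) * (κ * ξ) ^ 2 * κ + c₀ * κ ^ 3 : ℝ) : ℂ) +
        ((c₀ * κ ^ 3 * (ξ ^ 3 - 3 * ξ) : ℝ) : ℂ) * Complex.I := by
      rw [hs]
      push_cast
      have h := Complex.I_sq
      have h4 : Complex.I ^ 4 = 1 := Complex.I_pow_four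
      have h3 : Complex.I ^ 3 = -Complex.I := Complex.I_pow_three
      ring_nf
      rw [h4, h3, h]; ring
    rw [this, Complex.add_re, Complex.ofReal_re, Complex.re_ofReal_mul, Complex.I_re, mul_zero,
      add_zero]
    have h5 : 0 ≤ (κ * ξ) ^ 2 * κ := by positivity
    nlinarith [mul_nonneg (sub_nonneg.2 hcc) h5, mul_pos hC hκ3]
  have hEn : Complex.exp (Complex.I * d * s) * E ^ n = airyE (κ * d) (ξ + Complex.I) := by
    rw [hE, ← Complex.exp_nat_mul, ← Complex.exp_add, airyE]
    congr 1
    have h6 : (c₀ : ℂ) * (n * κ ^ 3) = 1 / 3 := by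
      have h7 := congrArg Complex.ofReal hc₀W
      rw [← hnκ] at h7
      push_cast at h7
      exact h7
    rw [hs]
    push_cast
    linear_combination Complex.I * (ξ + Complex.I) ^ 3 * h6
  have hexp : ‖Complex.exp (Complex.I * d * s)‖ ≤ Real.exp D := by
    rw [Complex.norm_exp, Real.exp_le_exp, hs']
    have : (Complex.I * d * (((κ * ξ : ℝ) : ℂ) + (κ : ℝ) * Complex.I)).re = -(κ * d) := by
      simp; ring
    rw [this]
    exact (neg_le_abs _).trans hdκ
  have hn2 : (2 : ℝ) ≤ n := by exact_mod_cast hn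
  -- `(n - 1) κ³` lies between `W / 2` and `W`, which turns the geometric decay into a Gaussian.
  have hρn1 : ρ ^ (n - 1) ≤
      Real.exp ((C + c₀) * W) * Real.exp (-(1 / Real.pi ^ 2) * ξ ^ 2) := by
    rw [hρ, ← Real.exp_nat_mul, ← Real.exp_add, Real.exp_le_exp,
      Nat.cast_sub (by omega), Nat.cast_one]
    have e1 : ((n : ℝ) - 1) * (-c * (κ * ξ) ^ 2 * κ + (C + c₀) * κ ^ 3) =
      (C + c₀) * (((n : ℝ) - 1) * κ ^ 3) - c * (((n : ℝ) - 1) * κ ^ 3) * ξ ^ 2 := by ring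
    have e2 : ((n : ℝ) - 1) * κ ^ 3 ≤ W := by rw [sub_mul, hnκ]; linarith
    have e3 : W / 2 ≤ ((n : ℝ) - 1) * κ ^ 3 := by
      have := mul_le_mul_of_nonneg_right hn2 hκ3.le
      rw [sub_mul, hnκ]; linarith
    have e4 : -(1 / Real.pi ^ 2) * ξ ^ 2 = -(c * (W / 2) * ξ ^ 2) := by
      have : c * (W / 2) = 1 / Real.pi ^ 2 := by
        rw [← mul_div_assoc, hcW]; ring
      rw [this]; ring
    rw [e1, e4]
    have e5 : (C + c₀) * (((n : ℝ) - 1) * κ ^ 3) ≤ (C + c₀) * W := by gcongr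
    have e6 : c * (W / 2) * ξ ^ 2 ≤ c * (((n : ℝ) - 1) * κ ^ 3) * ξ ^ 2 := by gcongr
    linarith
  have hρn : ρ ^ n ≤
      Real.exp ((C + c₀) * W) * Real.exp (-(1 / Real.pi ^ 2) * ξ ^ 2) := by
    rw [hρ, ← Real.exp_nat_mul, ← Real.exp_add, Real.exp_le_exp]
    have e1 : (n : ℝ) * (-c * (κ * ξ) ^ 2 * κ + (C + c₀) * κ ^ 3) =
      (C + c₀) * ((n : ℝ) * κ ^ 3) - c * ((n : ℝ) * κ ^ 3) * ξ ^ 2 := by ring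
    rw [e1, hnκ, hcW]
    have : (0 : ℝ) ≤ 1 / Real.pi ^ 2 * ξ ^ 2 := by positivity
    have e2 : 2 / Real.pi ^ 2 * ξ ^ 2 = 2 * (1 / Real.pi ^ 2 * ξ ^ 2) := by ring
    linarith
  set X := Real.exp ((C + c₀) * W) with hX
  set Y := Real.exp (-(1 / Real.pi ^ 2) * ξ ^ 2) with hY
  have hfin : Complex.exp (Complex.I * d * s) * gF A s ^ n * g s -
      g 0 * airyE (κ * d) (ξ + Complex.I) =
      Complex.exp (Complex.I * d * s) *
        (gF A s ^ n * (g s - g 0) + g 0 * (gF A s ^ n - E ^ n)) := by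
    rw [← hEn]; ring
  rw [hfin, norm_mul]
  have k1 : ‖gF A s ^ n * (g s - g 0)‖ ≤ (X * Y) * (L * (κ * m)) := by
    rw [norm_mul, norm_pow]
    have := hgL s hsK
    rw [hsn] at this
    refine mul_le_mul ?_ this (norm_nonneg _) (by positivity)
    exact (pow_le_pow_left₀ (norm_nonneg _) hGρ n).trans hρn
  have k2 : ‖g 0 * (gF A s ^ n - E ^ n)‖ ≤ ‖g 0‖ * (C₄ * W * κ * m ^ 4 * (X * Y)) := by
    rw [norm_mul]
    have h4 := hG4 s hsK
    rw [hsn] at h4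
    refine mul_le_mul_of_nonneg_left ((norm_pow_sub_pow_le hGρ hEρ n).trans ?_) (norm_nonneg _)
    calc _ ≤ n * (C₄ * (κ * m) ^ 4) * (X * Y) := by
          gcongr
      _ = C₄ * (n * κ ^ 3) * κ * m ^ 4 * (X * Y) := by ring
      _ = _ := by rw [hnκ]
  have hm4 : m ≤ m ^ 4 := le_self_pow₀ hm1 (by norm_num)
  calc _ ≤ Real.exp D * ((X * Y) * (L * (κ * m)) + ‖g 0‖ * (C₄ * W * κ * m ^ 4 * (X * Y))) := by
        refine mul_le_mul hexp ((norm_add_le _ _).trans (add_le_add k1 k2)) (norm_nonneg _)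
          (Real.exp_pos _).le
    _ ≤ Real.exp D * ((X * Y) * (L * (κ * m ^ 4)) + ‖g 0‖ * (C₄ * W * κ * m ^ 4 * (X * Y))) := by
        gcongr
    _ = κ * (Real.exp D * X * (L + ‖g 0‖ * (C₄ * W)) * ((m ^ 2) ^ 2 * Y)) := by ring
    _ = _ := by rw [hm2]

set_option maxHeartbeats 1000000 in
/-- Uniform Airy asymptotics of the oscillatory integral `∫ e^{iys} e^{-inν(s)} g(s) ds` over one
period. The scale `κ` is tied to `n` by `n κ³ = 2 / (A (1 - A²))`. -/
lemma airy_core {A : ℝ} (h0 : 0 < A) (h1 : A < 1) {g : ℂ → ℂ}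
    (hg : DifferentiableOn ℂ g (uDom A)) (hgp : ∀ s, g (s + 2 * Real.pi) = g s) (D : ℝ) :
    ∃ K > 0, ∃ δ > 0, ∀ (n : ℕ) (κ : ℝ) (y : ℤ), 2 ≤ n → 0 < κ → κ ≤ δ →
      n * κ ^ 3 = 2 / (A * (1 - A ^ 2)) → |κ * (y - n * A)| ≤ D →
      ‖(∫ x : ℝ in (-Real.pi)..Real.pi, Complex.exp (Complex.I * y * x) * fF A x ^ n * g x) -
        2 * Real.pi * κ * g 0 * Ai (κ * (y - n * A))‖ ≤ K * κ ^ 2 := by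
  obtain ⟨δ, hδ, hstrip⟩ := exists_strip h0 h1
  have hK : kRect δ ⊆ uDom A := fun s hs => hstrip s (mem_kRect.1 hs).2
  obtain ⟨K, hKpos, hin⟩ := pointwise_inside h0 h1 hδ hK hg D
  have hpi := Real.pi_gt_three
  set p := 1 / Real.pi ^ 2 with hp
  have hppos : 0 < p := by positivity
  have hp1 : p ≤ 1 := by
    rw [hp, div_le_one (by positivity)]; nlinarith
  set K₁ := K + ‖g 0‖ * Real.exp (1 / 3 + D) with hK₁
  have hK₁pos : 0 < K₁ := by positivity
  set B : ℝ → ℝ := fun ξ => Real.exp (-(p / 2) * ξ ^ 2) with hB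
  have hBi : Integrable B := integrable_exp_neg_mul_sq (by positivity)
  have hBI : 0 ≤ ∫ ξ, B ξ := integral_nonneg fun ξ => (Real.exp_pos _).le
  refine ⟨K₁ * (1 + 4 / p) ^ 2 * (∫ ξ, B ξ) + 1, by positivity, δ, hδ, ?_⟩
  intro n κ y hn hκ hκδ hnκ hd
  set d : ℝ := y - n * A with hdd
  set Φ : ℂ → ℂ := fun s => Complex.exp (Complex.I * y * s) * fF A s ^ n * g s with hΦ
  have hΦd : DifferentiableOn ℂ Φ (uDom A) := by
    intro s hs
    have hu : DifferentiableAt ℂ (uF A) s := (uF_hasDerivAt hs).differentiableAt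
    have hf : DifferentiableAt ℂ (fF A) s :=
      hu.sub ((Complex.differentiable_sin s).const_mul _)
    have he : DifferentiableAt ℂ (fun s : ℂ => Complex.exp (Complex.I * y * s)) s := by fun_prop
    exact ((he.mul (hf.pow n)).mul (hg.differentiableAt
      ((isOpen_uDom A).mem_nhds hs))).differentiableWithinAt
  have hΦp : ∀ s, Φ (s + 2 * Real.pi) = Φ s := by
    intro s
    simp only [hΦ]
    rw [hgp]
    congr 2
    · rw [mul_add, Complex.exp_add]
      have : Complex.I * y * (2 * Real.pi) = y * (2 * Real.pi * Complex.I) := by ring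
      rw [this, Complex.exp_int_mul_two_pi_mul_I, mul_one]
    · have e : s + 2 * Real.pi = (s + Real.pi) + Real.pi := by ring
      rw [fF, fF, Complex.sin_add_two_pi, e, uF_add_pi, uF_add_pi]
  have hshift := contour_shift hK hΦd hΦp hκ.le hκδ
  set S : Set ℝ := Set.Ioc (-(Real.pi / κ)) (Real.pi / κ) with hS
  have hSle : -(Real.pi / κ) ≤ Real.pi / κ := by
    have : 0 < Real.pi / κ := by positivity
    linarith
  have hscale : ∫ x in (-Real.pi)..Real.pi, Φ (x + κ * Complex.I) =
      κ * ∫ ξ, S.indicator (fun ξ : ℝ => Φ (κ * (ξ + Complex.I))) ξ := by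
    rw [integral_indicator measurableSet_Ioc, ← intervalIntegral.integral_of_le hSle]
    have := intervalIntegral.integral_comp_mul_left (a := -(Real.pi / κ)) (b := Real.pi / κ)
      (fun x : ℝ => Φ (x + κ * Complex.I)) hκ.ne'
    rw [mul_neg, mul_div_cancel₀ _ hκ.ne'] at this
    have e : ∀ ξ : ℝ, Φ (((κ * ξ : ℝ) : ℂ) + κ * Complex.I) = Φ (κ * (ξ + Complex.I)) := by
      intro ξ; congr 1; push_cast; ring
    simp only [e] at this
    rw [this, Complex.real_smul, ← mul_assoc]
    push_cast
    rw [mul_inv_cancel₀ (by exact_mod_cast hκ.ne'), one_mul]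
  have hmem : ∀ ξ ∈ Set.Icc (-(Real.pi / κ)) (Real.pi / κ), |κ * ξ| ≤ Real.pi := by
    intro ξ hξ
    rw [abs_mul, abs_of_pos hκ, mul_comm, ← le_div_iff₀ hκ]
    exact abs_le.2 hξ
  have hcont : ContinuousOn (fun ξ : ℝ => Φ (κ * (ξ + Complex.I)))
      (Set.Icc (-(Real.pi / κ)) (Real.pi / κ)) := by
    refine hΦd.continuousOn.comp (by fun_prop) ?_
    intro ξ hξ
    apply hK
    have : (κ : ℂ) * (ξ + Complex.I) = ((κ * ξ : ℝ) : ℂ) + (κ : ℝ) * Complex.I := by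
      push_cast; ring
    change (κ : ℂ) * (ξ + Complex.I) ∈ _
    rw [this]
    exact mem_kRect_vert (hmem ξ hξ) hκ.le hκδ
  have hint1 : Integrable (S.indicator (fun ξ : ℝ => Φ (κ * (ξ + Complex.I)))) :=
    ((hcont.integrableOn_compact isCompact_Icc).mono_set Set.Ioc_subset_Icc_self).integrable_indicator
      measurableSet_Ioc
  have hint2 := (integrable_airyE (κ * d)).const_mul (g 0)
  have hmain : (∫ x : ℝ in (-Real.pi)..Real.pi, Φ x) -
        2 * Real.pi * κ * g 0 * Ai (κ * d) =
      κ * ∫ ξ : ℝ, (S.indicator (fun ξ : ℝ => Φ (κ * (ξ + Complex.I))) ξ -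
        g 0 * airyE (κ * d) (ξ + Complex.I)) := by
    rw [integral_sub hint1 hint2, integral_const_mul, hshift, hscale, Ai_eq]
    have : (Real.pi : ℂ) ≠ 0 := by exact_mod_cast Real.pi_ne_zero
    push_cast
    field_simp
  have hbound : ∀ ξ : ℝ, ‖S.indicator (fun ξ : ℝ => Φ (κ * (ξ + Complex.I))) ξ -
        g 0 * airyE (κ * d) (ξ + Complex.I)‖ ≤ κ * (K₁ * (1 + 4 / p) ^ 2) * B ξ := by
    intro ξ
    have hpoly := sq_mul_exp_le (sq_nonneg ξ) hppos
    suffices hh : ‖S.indicator (fun ξ : ℝ => Φ (κ * (ξ + Complex.I))) ξ -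
        g 0 * airyE (κ * d) (ξ + Complex.I)‖ ≤
        κ * (K₁ * ((1 + ξ ^ 2) ^ 2 * Real.exp (-p * ξ ^ 2))) by
      refine hh.trans ?_
      calc _ ≤ κ * (K₁ * ((1 + 4 / p) ^ 2 * Real.exp (-(p / 2) * ξ ^ 2))) := by gcongr
        _ = _ := by simp only [hB]; ring
    by_cases hξ : ξ ∈ S
    · rw [Set.indicator_of_mem hξ]
      have := hin n κ d ξ hn hκ hκδ hnκ hd (hmem ξ (Set.Ioc_subset_Icc_self hξ))
      have e : Φ (κ * (ξ + Complex.I)) =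
        Complex.exp (Complex.I * d * (κ * (ξ + Complex.I))) * gF A (κ * (ξ + Complex.I)) ^ n *
          g (κ * (ξ + Complex.I)) := by
        simp only [hΦ]
        rw [exp_I_split]
      rw [e]
      refine this.trans ?_
      have : K ≤ K₁ := by rw [hK₁]; linarith [show 0 ≤ ‖g 0‖ * Real.exp (1 / 3 + D) by positivity]
      gcongr
    · rw [Set.indicator_of_notMem hξ, zero_sub, norm_neg, norm_mul, norm_airyE_one]
      have hξκ : 1 ≤ κ * |ξ| := by
        rw [hS, Set.mem_Ioc, not_and_or, not_lt, not_le] at hξ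
        have : Real.pi / κ ≤ |ξ| := by
          rcases hξ with h | h
          · have := neg_abs_le ξ; linarith
          · have := le_abs_self ξ; linarith
        rw [div_le_iff₀ hκ] at this
        linarith
      have e1 : Real.exp (1 / 3 - κ * d) ≤ Real.exp (1 / 3 + D) := by
        rw [Real.exp_le_exp]; linarith [neg_abs_le (κ * d)]
      have e2 : Real.exp (-1 * ξ ^ 2) ≤ Real.exp (-p * ξ ^ 2) := by
        rw [Real.exp_le_exp]; nlinarith [sq_nonneg ξ]
      have e3 : |ξ| ≤ (1 + ξ ^ 2) ^ 2 := by
        rw [← sq_abs ξ]; nlinarith [abs_nonneg ξ, sq_nonneg (|ξ| - 1), sq_nonneg (|ξ| ^ 2)]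
      have e4 : 1 ≤ κ * (1 + ξ ^ 2) ^ 2 := hξκ.trans (by gcongr)
      have e5 : ‖g 0‖ * Real.exp (1 / 3 + D) ≤ K₁ := by rw [hK₁]; linarith
      calc _ ≤ ‖g 0‖ * (Real.exp (1 / 3 + D) * Real.exp (-p * ξ ^ 2)) := by gcongr
        _ = (‖g 0‖ * Real.exp (1 / 3 + D)) * Real.exp (-p * ξ ^ 2) * 1 := by ring
        _ ≤ K₁ * Real.exp (-p * ξ ^ 2) * (κ * (1 + ξ ^ 2) ^ 2) := by gcongr
        _ = _ := by ring
  change ‖(∫ x : ℝ in (-Real.pi)..Real.pi, Φ x) - 2 * Real.pi * κ * g 0 * Ai (κ * (y - n * A))‖ ≤ _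
  rw [hmain, norm_mul, Complex.norm_real, Real.norm_of_nonneg hκ.le]
  have hI : ‖∫ ξ : ℝ, (S.indicator (fun ξ : ℝ => Φ (κ * (ξ + Complex.I))) ξ -
        g 0 * airyE (κ * d) (ξ + Complex.I))‖ ≤ κ * (K₁ * (1 + 4 / p) ^ 2) * ∫ ξ, B ξ := by
    rw [← integral_const_mul]
    exact norm_integral_le_of_norm_le (hBi.const_mul _) (Eventually.of_forall hbound)
  calc _ ≤ κ * (κ * (K₁ * (1 + 4 / p) ^ 2) * ∫ ξ, B ξ) := by gcongr
    _ = K₁ * (1 + 4 / p) ^ 2 * (∫ ξ, B ξ) * κ ^ 2 := by ring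
    _ ≤ _ := by gcongr; linarith

/-! ### Fourier representation and spectral decomposition -/

/-- `ζ = i ā / |a|`; the substitution `e^{ik} = ζ e^{is}` puts the degenerate stationary points of
the phase at `s = 0` and `s = π`. -/
def zetaQ (a : ℂ) : ℂ := Complex.I * (starRingEnd ℂ) a / ‖a‖

/-- The Fourier symbol of the walk applied to a vector `v`, in the variable `s`. -/
def symQ (a b : ℂ) (s : ℂ) (v : ℂ × ℂ) : ℂ × ℂ :=
  (Complex.I * ‖a‖ * Complex.exp (s * Complex.I) * v.1
      + -Complex.I * a * b / ‖a‖ * Complex.exp (-s * Complex.I) * v.2,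
   -(Complex.I * (starRingEnd ℂ) a * (starRingEnd ℂ) b / ‖a‖) * Complex.exp (s * Complex.I) * v.1
      + -Complex.I * ‖a‖ * Complex.exp (-s * Complex.I) * v.2)

/-- The spectral projection of the symbol for the eigenvalue `-i e^{-iν(s)}`, applied to `φ`. -/
def projQ (a b : ℂ) (φ : ℂ × ℂ) (s : ℂ) : ℂ × ℂ :=
  ((Complex.I * (uF ‖a‖ s + Complex.I * ‖a‖ * Complex.sin s) * φ.1 - (symQ a b s φ).1)
      / (2 * Complex.I * uF ‖a‖ s),
   (Complex.I * (uF ‖a‖ s + Complex.I * ‖a‖ * Complex.sin s) * φ.2 - (symQ a b s φ).2)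
      / (2 * Complex.I * uF ‖a‖ s))

lemma mul_conj_self (a : ℂ) : a * (starRingEnd ℂ) a = (‖a‖ : ℂ) ^ 2 := by
  rw [Complex.mul_conj, Complex.normSq_eq_norm_sq]; push_cast; rfl

lemma zetaQ_mul {a : ℂ} (ha : a ≠ 0) : zetaQ a * (-Complex.I * a / ‖a‖) = 1 := by
  have hA : (‖a‖ : ℂ) ≠ 0 := by simpa using ha
  have h := mul_conj_self a
  rw [zetaQ]
  field_simp
  linear_combination h - (a * (starRingEnd ℂ) a) * Complex.I_sq

lemma zetaQ_ne {a : ℂ} (ha : a ≠ 0) : zetaQ a ≠ 0 := left_ne_zero_of_mul_eq_one (zetaQ_mul ha)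

lemma zetaQ_inv {a : ℂ} (ha : a ≠ 0) : (zetaQ a)⁻¹ = -Complex.I * a / ‖a‖ :=
  inv_eq_of_mul_eq_one_right (zetaQ_mul ha)

lemma norm_zetaQ {a : ℂ} (ha : a ≠ 0) : ‖zetaQ a‖ = 1 := by
  have : ‖a‖ ≠ 0 := by simpa using ha
  rw [zetaQ]; simp [this]

lemma continuous_symQ_iter (a b : ℂ) (φ : ℂ × ℂ) (n : ℕ) :
    Continuous fun s : ℝ => (symQ a b s)^[n] φ := by
  induction n with
  | zero => exact continuous_const (y := φ)
  | succ n ih =>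
    simp only [Function.iterate_succ_apply']
    unfold symQ at ih ⊢
    have h1 := ih.fst
    have h2 := ih.snd
    refine Continuous.prodMk ?_ ?_
    · exact (Continuous.mul (by fun_prop) h1).add (Continuous.mul (by fun_prop) h2)
    · exact (Continuous.mul (by fun_prop) h1).add (Continuous.mul (by fun_prop) h2)

lemma integral_exp_int (x : ℤ) :
    ∫ s : ℝ in (-Real.pi)..Real.pi, Complex.exp (Complex.I * x * s) =
      if x = 0 then 2 * (Real.pi : ℂ) else 0 := by
  split_ifs with h
  · subst h; simp; ring
  · have hx : Complex.I * (x : ℂ) ≠ 0 := mul_ne_zero Complex.I_ne_zero (by exact_mod_cast h)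
    rw [integral_exp_mul_complex hx, div_eq_zero_iff]
    left
    have : Complex.I * x * (Real.pi : ℝ) =
        Complex.I * x * ((-Real.pi : ℝ) : ℂ) + x * (2 * Real.pi * Complex.I) := by
      push_cast; ring
    rw [this, Complex.exp_add, Complex.exp_int_mul_two_pi_mul_I, mul_one, sub_self]

/-- Fourier representation of the walk. -/
lemma qw_fourier {a b : ℂ} (ha : a ≠ 0) (φ : ℂ × ℂ) (n : ℕ) (x : ℤ) :
    ((qwStep a b)^[n] (qwDelta φ)) x =
      (zetaQ a ^ x / (2 * Real.pi) * ∫ s : ℝ in (-Real.pi)..Real.pi,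
          Complex.exp (Complex.I * x * s) * ((symQ a b s)^[n] φ).1,
       zetaQ a ^ x / (2 * Real.pi) * ∫ s : ℝ in (-Real.pi)..Real.pi,
          Complex.exp (Complex.I * x * s) * ((symQ a b s)^[n] φ).2) := by
  have hA : (‖a‖ : ℂ) ≠ 0 := by simpa using ha
  have hpi : (Real.pi : ℂ) ≠ 0 := by exact_mod_cast Real.pi_ne_zero
  induction n generalizing x with
  | zero =>
    simp only [Function.iterate_zero, id_eq, intervalIntegral.integral_mul_const, integral_exp_int,
      qwDelta]
    split_ifs with h
    · subst h
      ext <;> simp <;> field_simp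
    · ext <;> simp
  | succ n ih =>
    rw [Function.iterate_succ_apply', qwStep, ih, ih]
    have hc1 := (continuous_symQ_iter a b φ n).fst
    have hc2 := (continuous_symQ_iter a b φ n).snd
    have hi1 : IntervalIntegrable (fun s : ℝ => Complex.exp (Complex.I * (x + 1 : ℤ) * s) *
        ((symQ a b s)^[n] φ).1) volume (-Real.pi) Real.pi :=
      (Continuous.mul (by fun_prop) hc1).intervalIntegrable _ _
    have hi2 : IntervalIntegrable (fun s : ℝ => Complex.exp (Complex.I * (x - 1 : ℤ) * s) *
        ((symQ a b s)^[n] φ).2) volume (-Real.pi) Real.pi :=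
      (Continuous.mul (by fun_prop) hc2).intervalIntegrable _ _
    have hz1 : zetaQ a ^ (x + 1) = zetaQ a ^ x * zetaQ a := zpow_add_one₀ (zetaQ_ne ha) x
    have hz2 : zetaQ a ^ (x - 1) = zetaQ a ^ x * (zetaQ a)⁻¹ := zpow_sub_one₀ (zetaQ_ne ha) x
    have he1 : ∀ s : ℝ, Complex.exp (Complex.I * (x + 1 : ℤ) * s) =
        Complex.exp (Complex.I * x * s) * Complex.exp (s * Complex.I) := by
      intro s; rw [← Complex.exp_add]; congr 1; push_cast; ring
    have he2 : ∀ s : ℝ, Complex.exp (Complex.I * (x - 1 : ℤ) * s) =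
        Complex.exp (Complex.I * x * s) * Complex.exp (-s * Complex.I) := by
      intro s; rw [← Complex.exp_add]; congr 1; push_cast; ring
    have hcomb : ∀ c₁ c₂ : ℂ,
        c₁ * (zetaQ a ^ (x + 1) / (2 * Real.pi) * ∫ s : ℝ in (-Real.pi)..Real.pi,
          Complex.exp (Complex.I * (x + 1 : ℤ) * s) * ((symQ a b s)^[n] φ).1) +
        c₂ * (zetaQ a ^ (x - 1) / (2 * Real.pi) * ∫ s : ℝ in (-Real.pi)..Real.pi,
          Complex.exp (Complex.I * (x - 1 : ℤ) * s) * ((symQ a b s)^[n] φ).2) =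
        zetaQ a ^ x / (2 * Real.pi) * ∫ s : ℝ in (-Real.pi)..Real.pi,
          Complex.exp (Complex.I * x * s) *
            (c₁ * zetaQ a * Complex.exp (s * Complex.I) * ((symQ a b s)^[n] φ).1 +
             c₂ * (zetaQ a)⁻¹ * Complex.exp (-s * Complex.I) * ((symQ a b s)^[n] φ).2) := by
      intro c₁ c₂
      have : ∀ s : ℝ, Complex.exp (Complex.I * x * s) *
            (c₁ * zetaQ a * Complex.exp (s * Complex.I) * ((symQ a b s)^[n] φ).1 +
             c₂ * (zetaQ a)⁻¹ * Complex.exp (-s * Complex.I) * ((symQ a b s)^[n] φ).2) =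
          c₁ * zetaQ a * (Complex.exp (Complex.I * (x + 1 : ℤ) * s) * ((symQ a b s)^[n] φ).1) +
          c₂ * (zetaQ a)⁻¹ *
            (Complex.exp (Complex.I * (x - 1 : ℤ) * s) * ((symQ a b s)^[n] φ).2) := by
        intro s; rw [he1, he2]; ring
      simp only [this]
      rw [intervalIntegral.integral_add (hi1.const_mul _) (hi2.const_mul _),
        intervalIntegral.integral_const_mul, intervalIntegral.integral_const_mul, hz1, hz2]
      ring
    have hconj := mul_conj_self a
    have f1 : a * zetaQ a = Complex.I * ‖a‖ := by
      rw [zetaQ]; field_simp; linear_combination hconj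
    have f2 : b * (zetaQ a)⁻¹ = -Complex.I * a * b / ‖a‖ := by rw [zetaQ_inv ha]; ring
    have f3 : -(starRingEnd ℂ) b * zetaQ a =
        -(Complex.I * (starRingEnd ℂ) a * (starRingEnd ℂ) b / ‖a‖) := by rw [zetaQ]; ring
    have f4 : (starRingEnd ℂ) a * (zetaQ a)⁻¹ = -Complex.I * ‖a‖ := by
      rw [zetaQ_inv ha]; field_simp; linear_combination -hconj
    simp only [hcomb, f1, f2, f3, f4, Function.iterate_succ_apply', symQ]

/-- Cayley–Hamilton for a `2 × 2` matrix: `(m - r) v` is an eigenvector for the eigenvalue `l`. -/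
lemma eigen_aux {m11 m12 m21 m22 l r : ℂ} (h1 : l + r = m11 + m22)
    (h2 : l * r = m11 * m22 - m12 * m21) (x y : ℂ) :
    m11 * (m11 * x + m12 * y - r * x) + m12 * (m21 * x + m22 * y - r * y) =
      l * (m11 * x + m12 * y - r * x) := by
  linear_combination (-(m12 * y + m11 * x)) * h1 + x * h2

lemma projQ_add_pi (a b : ℂ) (φ : ℂ × ℂ) (s : ℂ) :
    projQ a b φ (s + Real.pi) =
    ((Complex.I * (uF ‖a‖ s - Complex.I * ‖a‖ * Complex.sin s) * φ.1 + (symQ a b s φ).1)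
        / (2 * Complex.I * uF ‖a‖ s),
     (Complex.I * (uF ‖a‖ s - Complex.I * ‖a‖ * Complex.sin s) * φ.2 + (symQ a b s φ).2)
        / (2 * Complex.I * uF ‖a‖ s)) := by
  have e1 : Complex.exp ((s + Real.pi) * Complex.I) = -Complex.exp (s * Complex.I) := by
    rw [add_mul, Complex.exp_add, Complex.exp_pi_mul_I]; ring
  have e2 : Complex.exp (-(s + Real.pi) * Complex.I) = -Complex.exp (-s * Complex.I) := by
    rw [neg_add, add_mul, Complex.exp_add, neg_mul (Real.pi : ℂ), Complex.exp_neg,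
      Complex.exp_pi_mul_I]; norm_num
  simp only [projQ, symQ, uF_add_pi, Complex.sin_add_pi, e1, e2]
  ext <;> simp only <;> congr 1 <;> ring

lemma fF_add_pi (A : ℝ) (s : ℂ) :
    fF A (s + Real.pi) = uF A s + Complex.I * A * Complex.sin s := by
  rw [fF, uF_add_pi, Complex.sin_add_pi]; ring

/-- Spectral decomposition of the powers of the symbol; the two eigenvalue branches are exchanged
by `s ↦ s + π`. -/
lemma symQ_iter {a b : ℂ} (hab1 : ‖a‖ ^ 2 + ‖b‖ ^ 2 = 1) (ha : a ≠ 0) (φ : ℂ × ℂ) {s : ℂ}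
    (hs : s ∈ uDom ‖a‖) (n : ℕ) :
    (symQ a b s)^[n] φ =
      ((-Complex.I) ^ n * (fF ‖a‖ s ^ n * (projQ a b φ s).1 +
          (-1) ^ n * (fF ‖a‖ (s + Real.pi) ^ n * (projQ a b φ (s + Real.pi)).1)),
       (-Complex.I) ^ n * (fF ‖a‖ s ^ n * (projQ a b φ s).2 +
          (-1) ^ n * (fF ‖a‖ (s + Real.pi) ^ n * (projQ a b φ (s + Real.pi)).2))) := by
  have hA : (‖a‖ : ℂ) ≠ 0 := by simpa using ha
  have hu := uF_ne ‖a‖ s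
  have hI := Complex.I_ne_zero
  have hI2 := Complex.I_sq
  induction n with
  | zero =>
    rw [projQ_add_pi]
    simp only [Function.iterate_zero, id_eq, pow_zero, one_mul, projQ]
    ext <;> simp only <;> field_simp <;> ring
  | succ n ih =>
    rw [Function.iterate_succ_apply', ih]
    rw [projQ_add_pi, fF_add_pi]
    have hu2 := uF_sq hs
    have hsin : Complex.sin s = (Complex.exp (-s * Complex.I) - Complex.exp (s * Complex.I))
      * Complex.I / 2 := rfl
    have hee : Complex.exp (s * Complex.I) * Complex.exp (-s * Complex.I) = 1 := by
      rw [← Complex.exp_add]; simp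
    have hbb : (‖a‖ : ℂ) ^ 2 + b * (starRingEnd ℂ) b = 1 := by
      rw [mul_conj_self]; exact_mod_cast hab1
    have haa := mul_conj_self a
    simp only [projQ, symQ, fF]
    set u := uF ‖a‖ s
    set A : ℂ := (‖a‖ : ℂ)
    set e := Complex.exp (s * Complex.I)
    set e' := Complex.exp (-s * Complex.I)
    set S := Complex.sin s
    set m11 := Complex.I * A * e with hm11
    set m12 := -Complex.I * a * b / A * e' with hm12
    set m21 := -(Complex.I * (starRingEnd ℂ) a * (starRingEnd ℂ) b / A) * e with hm21
    set m22 := -Complex.I * A * e' with hm22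
    have htr : Complex.I * (u + Complex.I * A * S) + -Complex.I * (u - Complex.I * A * S)
        = m11 + m22 := by
      rw [hm11, hm22, hsin]
      linear_combination (A * Complex.I * (e' - e)) * hI2
    have hdet : Complex.I * (u + Complex.I * A * S) * (-Complex.I * (u - Complex.I * A * S))
        = m11 * m22 - m12 * m21 := by
      have r : m12 * m21 = -(b * (starRingEnd ℂ) b) := by
        rw [hm12, hm21]
        have : -Complex.I * a * b / A * e' * (-(Complex.I * (starRingEnd ℂ) a * (starRingEnd ℂ) b / A) * e)
          = Complex.I ^ 2 * (a * (starRingEnd ℂ) a) * (b * (starRingEnd ℂ) b) * (e * e') / A ^ 2 := by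
          field_simp
        rw [this, haa, hee, hI2]; field_simp
      rw [r, hm11, hm22]
      linear_combination (-(u ^ 2 - Complex.I ^ 2 * A ^ 2 * S ^ 2) - A ^ 2 * S ^ 2 + A ^ 2 * e * e') * hI2 + hu2 - hbb - A ^ 2 * hee
    set l := Complex.I * (u + Complex.I * A * S) with hl
    set r := -Complex.I * (u - Complex.I * A * S) with hr
    have hl' : -Complex.I * (-1) * (u + Complex.I * A * S) = l := by rw [hl]; ring
    have hp1 := eigen_aux htr hdet φ.1 φ.2
    have hp2 := eigen_aux (m11 := m22) (m12 := m21) (m21 := m12) (m22 := m11)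
      (l := l) (r := r) (by linear_combination htr) (by linear_combination hdet) φ.2 φ.1
    have hm1 := eigen_aux (m11 := m11) (m12 := m12) (m21 := m21) (m22 := m22)
      (l := r) (r := l) (by linear_combination htr) (by linear_combination hdet) φ.1 φ.2
    have hm2 := eigen_aux (m11 := m22) (m12 := m21) (m21 := m12) (m22 := m11)
      (l := r) (r := l) (by linear_combination htr) (by linear_combination hdet) φ.2 φ.1
    have hr2 : Complex.I * (u - Complex.I * A * S) = -r := by rw [hr]; ring
    have hfr : (-Complex.I) ^ n * (u - Complex.I * A * S) ^ n = r ^ n := by rw [hr, mul_pow]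
    have hfl : (-Complex.I) ^ n * ((-1) ^ n * (u + Complex.I * A * S) ^ n) = l ^ n := by
      rw [← mul_pow, ← mul_pow, ← hl']; congr 1; ring
    have hfr1 : (-Complex.I) ^ (n + 1) * (u - Complex.I * A * S) ^ (n + 1) = r ^ (n + 1) := by
      rw [hr, mul_pow]
    have hfl1 : (-Complex.I) ^ (n + 1) * ((-1) ^ (n + 1) * (u + Complex.I * A * S) ^ (n + 1))
        = l ^ (n + 1) := by
      rw [← mul_pow, ← mul_pow, ← hl']; congr 1; ring
    have gen : ∀ k (P Q : ℂ), (-Complex.I) ^ k * ((u - Complex.I * A * S) ^ k * P +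
        (-1) ^ k * ((u + Complex.I * A * S) ^ k * Q)) =
        (-Complex.I) ^ k * (u - Complex.I * A * S) ^ k * P +
        (-Complex.I) ^ k * ((-1) ^ k * (u + Complex.I * A * S) ^ k) * Q := by
      intro k P Q; ring
    simp only [gen, hfr, hfl, hfr1, hfl1, hr2]
    ext
    · simp only
      field_simp
      linear_combination (-r ^ n) * hm1 + l ^ n * hp1
    · simp only
      field_simp
      linear_combination (-r ^ n) * hm2 + l ^ n * hp2

/-! ### From the integrals to the transition probability -/

lemma projQ_add_two_pi (a b : ℂ) (φ : ℂ × ℂ) (s : ℂ) :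
    projQ a b φ (s + 2 * Real.pi) = projQ a b φ s := by
  have e1 : Complex.exp ((s + 2 * Real.pi) * Complex.I) = Complex.exp (s * Complex.I) := by
    rw [add_mul, Complex.exp_add, Complex.exp_two_pi_mul_I, mul_one]
  have e2 : Complex.exp (-(s + 2 * Real.pi) * Complex.I) = Complex.exp (-s * Complex.I) := by
    rw [neg_add, add_mul, Complex.exp_add, neg_mul (2 * Real.pi : ℂ), Complex.exp_neg,
      Complex.exp_two_pi_mul_I]; simp
  have e3 : uF ‖a‖ (s + 2 * Real.pi) = uF ‖a‖ s := by
    rw [two_mul, ← add_assoc, uF_add_pi, uF_add_pi]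
  simp only [projQ, symQ, e1, e2, e3, Complex.sin_add_two_pi]

lemma uF_differentiableOn (A : ℝ) : DifferentiableOn ℂ (uF A) (uDom A) :=
  fun _ hs => (uF_hasDerivAt hs).differentiableAt.differentiableWithinAt

lemma projQ_fst_differentiableOn (a b : ℂ) (φ : ℂ × ℂ) :
    DifferentiableOn ℂ (fun s => (projQ a b φ s).1) (uDom ‖a‖) := by
  have hu := uF_differentiableOn ‖a‖
  unfold projQ symQ
  refine DifferentiableOn.div ?_ (by fun_prop)
    fun s _ => mul_ne_zero (by simp) (uF_ne _ _)
  fun_prop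

lemma projQ_snd_differentiableOn (a b : ℂ) (φ : ℂ × ℂ) :
    DifferentiableOn ℂ (fun s => (projQ a b φ s).2) (uDom ‖a‖) := by
  have hu := uF_differentiableOn ‖a‖
  unfold projQ symQ
  refine DifferentiableOn.div ?_ (by fun_prop)
    fun s _ => mul_ne_zero (by simp) (uF_ne _ _)
  fun_prop

lemma projQ_zero {a : ℂ} (ha : a ≠ 0) (b : ℂ) (φ : ℂ × ℂ) :
    projQ a b φ 0 = (((1 - ‖a‖) * φ.1 + a * b / ‖a‖ * φ.2) / 2,
      ((starRingEnd ℂ) (a * b) / ‖a‖ * φ.1 + (1 + ‖a‖) * φ.2) / 2) := by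
  have hI := Complex.I_ne_zero
  have hA : (‖a‖ : ℂ) ≠ 0 := by simpa using ha
  simp only [projQ, symQ, uF_zero, Complex.sin_zero, neg_zero, zero_mul, Complex.exp_zero, map_mul]
  ext <;> simp only <;> field_simp <;> ring

/-- The mass of the initial state on the eigenvector at the stationary point produces the factor
`1 + |a| λ_A(φ)`. -/
lemma nsq_projQ_zero {a b : ℂ} (hab1 : ‖a‖ ^ 2 + ‖b‖ ^ 2 = 1) (ha : a ≠ 0) {φ : ℂ × ℂ}
    (hφ : nsq φ = 1) :
    ‖(projQ a b φ 0).1‖ ^ 2 + ‖(projQ a b φ 0).2‖ ^ 2 = (1 + ‖a‖ * lamA a b φ) / 2 := by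
  have hA : ‖a‖ ≠ 0 := by simpa using ha
  have hw : ‖a * b‖ ^ 2 = ‖a‖ ^ 2 * (1 - ‖a‖ ^ 2) := by rw [norm_mul, mul_pow, ← hab1]; ring
  rw [projQ_zero ha, lamA, ← map_mul]
  rw [nsq] at hφ
  generalize a * b = w at *
  generalize ‖a‖ = A at *
  obtain ⟨p, q⟩ := φ
  simp only [← Complex.normSq_eq_norm_sq, Complex.normSq_apply] at *
  simp only [Complex.add_re, Complex.add_im, Complex.mul_re, Complex.mul_im, Complex.conj_re,
    Complex.conj_im, Complex.div_ofReal_re, Complex.div_ofReal_im, Complex.sub_re, Complex.sub_im,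
    Complex.ofReal_re, Complex.ofReal_im, Complex.one_re, Complex.one_im, Complex.div_ofNat_re,
    Complex.div_ofNat_im]
  field_simp
  linear_combination (p.re ^ 2 + p.im ^ 2 + q.re ^ 2 + q.im ^ 2) * hw + 2 * A ^ 2 * hφ

/-- Under `s ↦ s + π` the character `e^{ixs}` picks up the sign `(-1)^x`. -/
lemma integral_shift_pi {F : ℂ → ℂ} (hF : ∀ s, F (s + 2 * Real.pi) = F s) (x : ℤ) :
    ∫ s : ℝ in (-Real.pi)..Real.pi, Complex.exp (Complex.I * x * s) * F (s + Real.pi) =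
      (-1) ^ x * ∫ s : ℝ in (-Real.pi)..Real.pi, Complex.exp (Complex.I * x * s) * F s := by
  have hper : Function.Periodic
      (fun s : ℝ => Complex.exp (Complex.I * x * s) * F s) (2 * Real.pi) := by
    intro s
    have : Complex.I * x * ((s + 2 * Real.pi : ℝ) : ℂ) =
        Complex.I * x * s + x * (2 * Real.pi * Complex.I) := by push_cast; ring
    simp only [this, Complex.exp_add, Complex.exp_int_mul_two_pi_mul_I, mul_one]
    push_cast
    rw [hF]
  have hp : Complex.exp (x * (Real.pi * Complex.I)) = (-1) ^ x := by
    rw [Complex.exp_int_mul, Complex.exp_pi_mul_I]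
  have hpp : ((-1 : ℂ) ^ x) * (-1) ^ x = 1 := by
    rw [← mul_zpow]; simp
  have h1 : ∀ s : ℝ, Complex.exp (Complex.I * x * s) * F (s + Real.pi) =
      (-1) ^ x * (fun s : ℝ => Complex.exp (Complex.I * x * s) * F s) (s + Real.pi) := by
    intro s
    have : Complex.I * x * ((s + Real.pi : ℝ) : ℂ) =
        Complex.I * x * s + x * (Real.pi * Complex.I) := by push_cast; ring
    simp only [this, Complex.exp_add, hp]
    push_cast
    linear_combination (-(Complex.exp (Complex.I * x * s) * F (s + Real.pi))) * hpp
  simp only [h1]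
  rw [intervalIntegral.integral_const_mul,
    intervalIntegral.integral_comp_add_right
      (fun s : ℝ => Complex.exp (Complex.I * x * s) * F s) Real.pi]
  have h2 := hper.intervalIntegral_add_eq (-Real.pi + Real.pi) (-Real.pi)
  have e1 : -Real.pi + Real.pi + 2 * Real.pi = Real.pi + Real.pi := by ring
  have e2 : -Real.pi + 2 * Real.pi = Real.pi := by ring
  rw [e1, e2] at h2
  rw [h2]

/-- Both eigenvalue branches contribute the same integral up to the sign `(-1)^{n+x}`. -/
lemma integral_two_branches {A : ℝ} (h0 : 0 < A) (h1 : A < 1) {g : ℂ → ℂ}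
    (hg : DifferentiableOn ℂ g (uDom A)) (hgp : ∀ s, g (s + 2 * Real.pi) = g s) (n : ℕ) (x : ℤ) :
    ∫ s : ℝ in (-Real.pi)..Real.pi, Complex.exp (Complex.I * x * s) *
        ((-Complex.I) ^ n * (fF A s ^ n * g s +
          (-1) ^ n * (fF A (s + Real.pi) ^ n * g (s + Real.pi)))) =
      (-Complex.I) ^ n * (1 + (-1) ^ ((n : ℤ) + x)) *
        ∫ s : ℝ in (-Real.pi)..Real.pi, Complex.exp (Complex.I * x * s) * fF A s ^ n * g s := by
  have hu := uF_differentiableOn A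
  have hfd : DifferentiableOn ℂ (fun s => fF A s ^ n * g s) (uDom A) := by
    unfold fF; fun_prop
  have hc : Continuous fun s : ℝ => fF A s ^ n * g s :=
    hfd.continuousOn.comp_continuous Complex.continuous_ofReal fun s => ofReal_mem_uDom h0 h1 s
  have hc' : Continuous fun s : ℝ => fF A (s + Real.pi) ^ n * g (s + Real.pi) := by
    have := hc.comp (continuous_add_const Real.pi)
    simpa [Function.comp_def] using this
  have hi1 : IntervalIntegrable (fun s : ℝ => Complex.exp (Complex.I * x * s) *
      (fF A s ^ n * g s)) volume (-Real.pi) Real.pi :=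
    (Continuous.mul (by fun_prop) hc).intervalIntegrable _ _
  have hi2 : IntervalIntegrable (fun s : ℝ => Complex.exp (Complex.I * x * s) *
      (fF A (s + Real.pi) ^ n * g (s + Real.pi))) volume (-Real.pi) Real.pi :=
    (Continuous.mul (by fun_prop) hc').intervalIntegrable _ _
  have hper : ∀ s, (fun s => fF A s ^ n * g s) (s + 2 * Real.pi) =
      (fun s => fF A s ^ n * g s) s := by
    intro s
    have e3 : fF A (s + 2 * Real.pi) = fF A s := by
      rw [fF, fF, two_mul, ← add_assoc, uF_add_pi, uF_add_pi, Complex.sin_add_pi,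
        Complex.sin_add_pi, neg_neg]
    simp only [e3, hgp]
  have hsh := integral_shift_pi (F := fun s => fF A s ^ n * g s) hper x
  have hsplit : ∀ s : ℝ, Complex.exp (Complex.I * x * s) *
        ((-Complex.I) ^ n * (fF A s ^ n * g s +
          (-1) ^ n * (fF A (s + Real.pi) ^ n * g (s + Real.pi)))) =
      (-Complex.I) ^ n * (Complex.exp (Complex.I * x * s) * (fF A s ^ n * g s)) +
      (-Complex.I) ^ n * (-1) ^ n * (Complex.exp (Complex.I * x * s) *
        (fF A (s + Real.pi) ^ n * g (s + Real.pi))) := by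
    intro s; ring
  simp only [hsplit]
  rw [intervalIntegral.integral_add (hi1.const_mul _) (hi2.const_mul _),
    intervalIntegral.integral_const_mul, intervalIntegral.integral_const_mul, hsh,
    zpow_add₀ (by norm_num), zpow_natCast]
  simp only [mul_assoc (Complex.exp _)]
  ring

/-- The transition probability as the squared modulus of two oscillatory integrals. -/
lemma qwP_eq {a b : ℂ} (hab1 : ‖a‖ ^ 2 + ‖b‖ ^ 2 = 1) (h0 : 0 < ‖a‖) (h1 : ‖a‖ < 1)
    (φ : ℂ × ℂ) (n : ℕ) (x : ℤ) :
    qwP a b φ n x = ((1 + (-1 : ℝ) ^ ((n : ℤ) + x)) / (2 * Real.pi)) ^ 2 *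
      (‖∫ s : ℝ in (-Real.pi)..Real.pi,
          Complex.exp (Complex.I * x * s) * fF ‖a‖ s ^ n * (projQ a b φ s).1‖ ^ 2 +
       ‖∫ s : ℝ in (-Real.pi)..Real.pi,
          Complex.exp (Complex.I * x * s) * fF ‖a‖ s ^ n * (projQ a b φ s).2‖ ^ 2) := by
  have ha : a ≠ 0 := by simpa using h0
  have hs : ∀ s : ℝ, (symQ a b s)^[n] φ = _ := fun s =>
    symQ_iter hab1 ha φ (ofReal_mem_uDom h0 h1 s) n
  rw [qwP, qw_fourier ha, nsq]
  simp only [hs]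
  rw [integral_two_branches h0 h1 (g := fun s => (projQ a b φ s).1)
      (projQ_fst_differentiableOn a b φ) (fun s => by simp only [projQ_add_two_pi]),
    integral_two_branches h0 h1 (g := fun s => (projQ a b φ s).2)
      (projQ_snd_differentiableOn a b φ) (fun s => by simp only [projQ_add_two_pi])]
  have hσ : ‖(1 + (-1 : ℂ) ^ ((n : ℤ) + x))‖ ^ 2 = (1 + (-1 : ℝ) ^ ((n : ℤ) + x)) ^ 2 := by
    have : (1 + (-1 : ℂ) ^ ((n : ℤ) + x)) = ((1 + (-1 : ℝ) ^ ((n : ℤ) + x) : ℝ) : ℂ) := by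
      push_cast; rfl
    rw [this, Complex.norm_real, Real.norm_eq_abs, sq_abs]
  have hpi : ‖(2 * Real.pi : ℂ)‖ = 2 * Real.pi := by
    rw [norm_mul, Complex.norm_real, Real.norm_of_nonneg Real.pi_pos.le]; simp
  simp only [norm_mul (_ ^ _ / _), norm_mul (_ * _), norm_mul (_ ^ _), norm_div, norm_zpow, norm_pow, norm_zetaQ ha, norm_neg, Complex.norm_I, hpi,
    one_zpow, one_pow, one_mul, mul_pow, hσ, div_pow]
  ring

lemma sq_norm_sub_le {J T : ℂ} {e M : ℝ} (h : ‖J - T‖ ≤ e) (hT : ‖T‖ ≤ M) :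
    |‖J‖ ^ 2 - ‖T‖ ^ 2| ≤ e * (e + 2 * M) := by
  have h1 := abs_norm_sub_norm_le J T
  have h2 : ‖J‖ ≤ e + M := by
    calc ‖J‖ = ‖(J - T) + T‖ := by ring_nf
      _ ≤ _ := (norm_add_le _ _).trans (add_le_add h hT)
  have : ‖J‖ ^ 2 - ‖T‖ ^ 2 = (‖J‖ - ‖T‖) * (‖J‖ + ‖T‖) := by ring
  rw [this, abs_mul, abs_of_nonneg (by positivity : 0 ≤ ‖J‖ + ‖T‖)]
  exact mul_le_mul (h1.trans h) (by linarith) (by positivity) ((norm_nonneg _).trans h)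

/-- Squared version of `airy_core`: the main term has size `κ` and the error size `κ²`, so the squares
differ by `O(κ³)`, that is `O(1/n)`. -/
lemma airy_sq {A : ℝ} (h0 : 0 < A) (h1 : A < 1) {g : ℂ → ℂ}
    (hg : DifferentiableOn ℂ g (uDom A)) (hgp : ∀ s, g (s + 2 * Real.pi) = g s) (D : ℝ) :
    ∃ K > 0, ∃ δ > 0, ∀ (n : ℕ) (κ : ℝ) (y : ℤ), 2 ≤ n → 0 < κ → κ ≤ δ →
      n * κ ^ 3 = 2 / (A * (1 - A ^ 2)) → |κ * (y - n * A)| ≤ D →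
      |‖∫ x : ℝ in (-Real.pi)..Real.pi,
          Complex.exp (Complex.I * y * x) * fF A x ^ n * g x‖ ^ 2 -
        (2 * Real.pi) ^ 2 * κ ^ 2 * ‖g 0‖ ^ 2 * ‖Ai (κ * (y - n * A))‖ ^ 2| ≤ K * κ ^ 3 := by
  obtain ⟨K, hK, δ, hδ, H⟩ := airy_core h0 h1 hg hgp D
  set M := 2 * Real.pi * ‖g 0‖ * Real.exp (1 / 3 + D) with hM
  have hM0 : 0 ≤ M := by positivity
  refine ⟨K * (K * δ + 2 * M), ?_, δ, hδ, ?_⟩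
  · have : 0 < K * δ := by positivity
    exact mul_pos hK (by linarith)
  intro n κ y hn hκ hκδ hnk hD
  have h2 := H n κ y hn hκ hκδ hnk hD
  have hT : ‖2 * Real.pi * κ * g 0 * Ai (κ * (y - n * A))‖ =
      2 * Real.pi * κ * ‖g 0‖ * ‖Ai (κ * (y - n * A))‖ := by
    simp only [norm_mul, Complex.norm_real, Real.norm_of_nonneg Real.pi_pos.le,
      Real.norm_of_nonneg hκ.le, Complex.norm_ofNat]
  have hAi : ‖Ai (κ * (y - n * A))‖ ≤ Real.exp (1 / 3 + D) :=
    (norm_Ai_le _).trans (Real.exp_le_exp.2 (by linarith [(abs_le.1 hD).1]))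
  have hTM : ‖2 * Real.pi * κ * g 0 * Ai (κ * (y - n * A))‖ ≤ κ * M := by
    rw [hT, hM]
    have := mul_le_mul_of_nonneg_left hAi (by positivity : 0 ≤ 2 * Real.pi * κ * ‖g 0‖)
    linarith
  have h3 := sq_norm_sub_le h2 hTM
  rw [hT] at h3
  have e : (2 * Real.pi) ^ 2 * κ ^ 2 * ‖g 0‖ ^ 2 * ‖Ai (κ * (y - n * A))‖ ^ 2 =
      (2 * Real.pi * κ * ‖g 0‖ * ‖Ai (κ * (y - n * A))‖) ^ 2 := by ring
  rw [e]
  refine h3.trans ?_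
  have : K * κ ^ 2 * (K * κ ^ 2 + 2 * (κ * M)) = K * (K * κ + 2 * M) * κ ^ 3 := by ring
  rw [this]
  gcongr

lemma one_add_neg_one_zpow_sq (m : ℤ) :
    (1 + (-1 : ℝ) ^ m) ^ 2 = 2 * (1 + (-1 : ℝ) ^ m) := by
  rcases Int.even_or_odd m with h | h
  · rw [h.neg_one_zpow]; norm_num
  · rw [h.neg_one_zpow]; norm_num

lemma one_add_neg_one_zpow_bd (m : ℤ) : |1 + (-1 : ℝ) ^ m| ≤ 2 := by
  rcases Int.even_or_odd m with h | h
  · rw [h.neg_one_zpow]; norm_num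
  · rw [h.neg_one_zpow]; norm_num

/-! ### The two walls -/

/-- The case `ε = 1`: the asymptotics at the right wall `y ≈ n |a|`. -/
lemma wall_right (a b : ℂ) (hab1 : ‖a‖ ^ 2 + ‖b‖ ^ 2 = 1) (hab : a * b ≠ 0)
    (φ : ℂ × ℂ) (hφ : nsq φ = 1) (y : ℕ → ℤ) (d : ℕ → ℝ)
    (hy : ∀ n : ℕ, (y n : ℝ) = (n : ℝ) * ‖a‖ + d n)
    (hd : d =O[atTop] fun n : ℕ => (n : ℝ) ^ ((1 : ℝ) / 3)) :
    (fun n : ℕ => qwP a b φ n (y n) -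
        (1 + (-1 : ℝ) ^ ((n : ℤ) + y n)) * ((2 / (‖a‖ * ‖b‖ ^ 2)) ^ ((1 : ℝ) / 3)) ^ 2 *
          (n : ℝ) ^ (-(2 : ℝ) / 3) *
          ‖Ai ((2 / (‖a‖ * ‖b‖ ^ 2)) ^ ((1 : ℝ) / 3) * (n : ℝ) ^ (-(1 : ℝ) / 3) * d n)‖ ^ 2 *
          (1 + ‖a‖ * lamA a b φ))
      =O[atTop] (fun n : ℕ => 1 / (n : ℝ)) := by
  have ha : a ≠ 0 := left_ne_zero_of_mul hab
  have hb : b ≠ 0 := right_ne_zero_of_mul hab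
  have h0 : 0 < ‖a‖ := by simpa using ha
  have hb0 : 0 < ‖b‖ := by simpa using hb
  have h1 : ‖a‖ < 1 := by nlinarith [pow_pos hb0 2]
  have hb2 : ‖b‖ ^ 2 = 1 - ‖a‖ ^ 2 := by linarith
  set c := 2 / (‖a‖ * ‖b‖ ^ 2) with hc
  have hc0 : 0 < c := by positivity
  set α := c ^ ((1 : ℝ) / 3) with hα
  have hα0 : 0 < α := Real.rpow_pos_of_pos hc0 _
  have hα3 : α ^ 3 = c := by
    rw [hα, ← Real.rpow_natCast, ← Real.rpow_mul hc0.le]; norm_num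
  obtain ⟨C, hC0, hC⟩ := hd.exists_pos
  obtain ⟨K₁, hK₁, δ₁, hδ₁, H₁⟩ := airy_sq h0 h1 (g := fun s => (projQ a b φ s).1)
      (projQ_fst_differentiableOn a b φ) (fun s => by simp only [projQ_add_two_pi]) (α * C)
  obtain ⟨K₂, hK₂, δ₂, hδ₂, H₂⟩ := airy_sq h0 h1 (g := fun s => (projQ a b φ s).2)
      (projQ_snd_differentiableOn a b φ) (fun s => by simp only [projQ_add_two_pi]) (α * C)
  have hlim : Tendsto (fun n : ℕ => α * (n : ℝ) ^ (-(1 : ℝ) / 3)) atTop (𝓝 0) := by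
    have := (tendsto_rpow_neg_atTop (by norm_num : (0 : ℝ) < 1 / 3)).comp
      tendsto_natCast_atTop_atTop
    have := this.const_mul α
    rw [mul_zero] at this
    refine this.congr fun n => ?_
    simp [neg_div]
  refine IsBigO.of_bound ((K₁ + K₂) * c / Real.pi ^ 2) ?_
  filter_upwards [hC.bound, hlim.eventually_le_const hδ₁, hlim.eventually_le_const hδ₂,
    eventually_ge_atTop 2] with n hdn hn1 hn2 hn
  have hnpos : (0 : ℝ) < n := by exact_mod_cast (by omega : 0 < n)
  set ν := (n : ℝ) ^ (-(1 : ℝ) / 3) with hν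
  have hν0 : 0 < ν := Real.rpow_pos_of_pos hnpos _
  have hν3 : ν ^ 3 = 1 / n := by
    rw [hν, ← Real.rpow_natCast, ← Real.rpow_mul hnpos.le]; norm_num [Real.rpow_neg_one]
  have hν2 : (n : ℝ) ^ (-(2 : ℝ) / 3) = ν ^ 2 := by
    rw [hν, ← Real.rpow_natCast, ← Real.rpow_mul hnpos.le]; norm_num
  have hν1 : ν * (n : ℝ) ^ ((1 : ℝ) / 3) = 1 := by
    rw [hν, ← Real.rpow_add hnpos]; norm_num
  have hκ0 : 0 < α * ν := mul_pos hα0 hν0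
  have hκ3 : (n : ℝ) * (α * ν) ^ 3 = 2 / (‖a‖ * (1 - ‖a‖ ^ 2)) := by
    rw [mul_pow, hα3, hν3, hc, hb2]; field_simp
  have hdy : (y n : ℝ) - n * ‖a‖ = d n := by rw [hy]; ring
  have hD : |α * ν * ((y n : ℝ) - n * ‖a‖)| ≤ α * C := by
    rw [hdy, abs_mul, abs_of_pos hκ0]
    rw [Real.norm_eq_abs, Real.norm_of_nonneg (by positivity)] at hdn
    calc α * ν * |d n| ≤ α * ν * (C * (n : ℝ) ^ ((1 : ℝ) / 3)) := by gcongr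
      _ = α * C * (ν * (n : ℝ) ^ ((1 : ℝ) / 3)) := by ring
      _ = α * C := by rw [hν1, mul_one]
  have e₁ := H₁ n _ (y n) hn hκ0 hn1 hκ3 hD
  have e₂ := H₂ n _ (y n) hn hκ0 hn2 hκ3 hD
  rw [hdy] at e₁ e₂
  rw [qwP_eq hab1 h0 h1, hν2]
  have hp := nsq_projQ_zero hab1 ha hφ
  have hσ := one_add_neg_one_zpow_sq ((n : ℤ) + y n)
  have hσb := one_add_neg_one_zpow_bd ((n : ℤ) + y n)
  set σ := 1 + (-1 : ℝ) ^ ((n : ℤ) + y n)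
  set J₁ := ∫ s : ℝ in (-Real.pi)..Real.pi,
    Complex.exp (Complex.I * (y n) * s) * fF ‖a‖ s ^ n * (projQ a b φ s).1
  set J₂ := ∫ s : ℝ in (-Real.pi)..Real.pi,
    Complex.exp (Complex.I * (y n) * s) * fF ‖a‖ s ^ n * (projQ a b φ s).2
  set P := Ai (α * ν * d n)
  have hpi := Real.pi_pos
  have key : (σ / (2 * Real.pi)) ^ 2 * (‖J₁‖ ^ 2 + ‖J₂‖ ^ 2) -
      σ * α ^ 2 * ν ^ 2 * ‖P‖ ^ 2 * (1 + ‖a‖ * lamA a b φ) =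
      σ / (2 * Real.pi ^ 2) *
        ((‖J₁‖ ^ 2 - (2 * Real.pi) ^ 2 * (α * ν) ^ 2 * ‖(projQ a b φ 0).1‖ ^ 2 * ‖P‖ ^ 2) +
         (‖J₂‖ ^ 2 - (2 * Real.pi) ^ 2 * (α * ν) ^ 2 * ‖(projQ a b φ 0).2‖ ^ 2 * ‖P‖ ^ 2)) := by
    have e : 1 + ‖a‖ * lamA a b φ =
      2 * (‖(projQ a b φ 0).1‖ ^ 2 + ‖(projQ a b φ 0).2‖ ^ 2) := by linarith
    rw [e, div_pow, hσ]
    field_simp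
    ring
  rw [key, norm_mul, Real.norm_eq_abs, Real.norm_eq_abs, abs_div,
    abs_of_pos (by positivity : 0 < 2 * Real.pi ^ 2), Real.norm_of_nonneg (by positivity)]
  calc |σ| / (2 * Real.pi ^ 2) * _ ≤ 2 / (2 * Real.pi ^ 2) * (K₁ * (α * ν) ^ 3 + K₂ * (α * ν) ^ 3) := by
        refine mul_le_mul (by gcongr) ((abs_add_le _ _).trans (add_le_add e₁ e₂)) (abs_nonneg _)
          (by positivity)
    _ = (K₁ + K₂) * c / Real.pi ^ 2 * (1 / n) := by
        rw [mul_pow, hα3, hν3]; field_simp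

/-- The reflection `x ↦ -x`, with the two components swapped, turns the walk of `(a, b)` into the walk
of `(conj a, -conj b)`. -/
lemma qwStep_reflect (a b : ℂ) (φ : ℂ × ℂ) (n : ℕ) (x : ℤ) :
    ((qwStep ((starRingEnd ℂ) a) (-(starRingEnd ℂ) b))^[n] (qwDelta φ.swap)) (-x) =
      (((qwStep a b)^[n] (qwDelta φ)) x).swap := by
  induction n generalizing x with
  | zero =>
    simp only [Function.iterate_zero, id_eq, qwDelta, neg_eq_zero]
    split_ifs <;> rfl
  | succ n ih =>
    rw [Function.iterate_succ_apply', Function.iterate_succ_apply']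
    simp only [qwStep]
    have e1 : -x + 1 = -(x - 1) := by ring
    have e2 : -x - 1 = -(x + 1) := by ring
    rw [e1, e2, ih, ih]
    ext <;> simp <;> ring

lemma qwP_reflect (a b : ℂ) (φ : ℂ × ℂ) (n : ℕ) (x : ℤ) :
    qwP ((starRingEnd ℂ) a) (-(starRingEnd ℂ) b) φ.swap n (-x) = qwP a b φ n x := by
  rw [qwP, qwStep_reflect, qwP, nsq, nsq, Prod.fst_swap, Prod.snd_swap, add_comm]

lemma lamA_reflect (a b : ℂ) (φ : ℂ × ℂ) :
    lamA ((starRingEnd ℂ) a) (-(starRingEnd ℂ) b) φ.swap = -lamA a b φ := by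
  have e : (starRingEnd ℂ) a * -(starRingEnd ℂ) b * (starRingEnd ℂ) φ.2 * φ.1 +
      a * -b * φ.2 * (starRingEnd ℂ) φ.1 = -(a * b * (starRingEnd ℂ) φ.1 * φ.2 +
      (starRingEnd ℂ) a * (starRingEnd ℂ) b * φ.1 * (starRingEnd ℂ) φ.2) := by ring
  simp only [lamA, Prod.fst_swap, Prod.snd_swap, map_neg, Complex.conj_conj, RCLike.norm_conj, e,
    Complex.neg_re]
  ring

/-- Theorem `wall`: Airy asymptotics of `p_n(φ; y_n)` around the wall
`y_n = ε n|a| + d_n`, `d_n = O(n^{1/3})`, `ε = ±1`: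
`p_n(φ;y_n) = (1+(−1)^{n+y_n}) α₀² n^{−2/3} |Ai(ε α₀ n^{−1/3} d_n)|² (1 + ε|a|λ_A(φ)) + O(1/n)`
with `α₀ = (2/(|a||b|²))^{1/3}`. -/
theorem stmt2 (a b : ℂ) (hab1 : ‖a‖ ^ 2 + ‖b‖ ^ 2 = 1) (hab : a * b ≠ 0)
    (φ : ℂ × ℂ) (hφ : nsq φ = 1) (ε : ℝ) (hε : ε = 1 ∨ ε = -1)
    (y : ℕ → ℤ) (d : ℕ → ℝ)
    (hy : ∀ n : ℕ, (y n : ℝ) = ε * (n : ℝ) * ‖a‖ + d n)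
    (hd : d =O[atTop] fun n : ℕ => (n : ℝ) ^ ((1 : ℝ) / 3)) :
    (fun n : ℕ => qwP a b φ n (y n) -
        (1 + (-1 : ℝ) ^ ((n : ℤ) + y n)) * ((2 / (‖a‖ * ‖b‖ ^ 2)) ^ ((1 : ℝ) / 3)) ^ 2 *
          (n : ℝ) ^ (-(2 : ℝ) / 3) *
          ‖Ai (ε * (2 / (‖a‖ * ‖b‖ ^ 2)) ^ ((1 : ℝ) / 3) * (n : ℝ) ^ (-(1 : ℝ) / 3) * d n)‖ ^ 2 *
          (1 + ε * ‖a‖ * lamA a b φ))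
      =O[atTop] (fun n : ℕ => 1 / (n : ℝ)) := by
  rcases hε with rfl | rfl
  · simpa only [one_mul] using
      wall_right a b hab1 hab φ hφ y d (fun n => by rw [hy]; ring) hd
  · have h := wall_right ((starRingEnd ℂ) a) (-(starRingEnd ℂ) b) (by simpa using hab1)
      (by simpa using hab) φ.swap (by rw [← hφ, nsq, nsq, Prod.fst_swap, Prod.snd_swap, add_comm])
      (fun n => -y n) (fun n => -d n) (fun n => by push_cast; rw [hy, RCLike.norm_conj]; ring)
      hd.neg_left
    refine h.congr_left fun n => ?_
    have hs : (-1 : ℝ) ^ ((n : ℤ) + -y n) = (-1 : ℝ) ^ ((n : ℤ) + y n) := by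
      rw [zpow_add₀ (by norm_num), zpow_add₀ (by norm_num), zpow_neg, ← inv_zpow]; norm_num
    simp only [qwP_reflect, lamA_reflect, norm_neg, RCLike.norm_conj, hs, mul_neg, neg_mul, one_mul]
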